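/- arXiv:2602.00550 — 6 statements merged into one kernel-verified Lean document; each statement's English description precedes it below -/
import Mathlib

section
/- Let n, r be natural numbers and let ρ^i_a : ℝ^n → ℝ (i < n, a < r) and C^c_{ab} : ℝ^n → ℝ (a,b,c < r) be smooth functions with C^c_{ab} = −C^c_{ba}. Define a bracket on smooth sections e : ℝ^n → ℝ^r by [e₁,e₂]^c := Σ_{i,a} ρ^i_a e₁^a ∂_i e₂^c − Σ_{i,a} ρ^i_a e₂^a ∂_i e₁^c + Σ_{a,b} C^c_{ab} e₁^a e₂^b. Then the Jacobi identity [[e₁,e₂],e₃] + [[e₂,e₃],e₁] + [[e₃,e₁],e₂] = 0 holds for all smooth sections e₁,e₂,e₃ if and only if the Lie algebroid structure identities (L1) and (L2) hold, namely (L1): Σ_j (ρ^j_a ∂_j ρ^i_b − ρ^j_b ∂_j ρ^i_a) = Σ_c C^c_{ab} ρ^i_c for all i,a,b, and (L2): Σ_d C^e_{ad} C^d_{bc} + Σ_j ρ^j_a ∂_j C^e_{bc} + (the same expression with (a,b,c) replaced by its two cyclic permutations) = 0 for all e,a,b,c. -/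
/-! Write `∇_u` for the derivative along the vector field `ρ(u)` and `C(u, v)` for the
zeroth-order part of the bracket, so that `[u, v] = ∇_u v - ∇_v u + C(u, v)` componentwise.
The anchor defect `ρ([u, v]) - [ρ(u), ρ(v)]` is tensorial (`anchorD_laBracket`): the second-order
terms cancel because partial derivatives commute. Expanding `[[u, v], w]` with the Leibniz rule
and summing cyclically, the second-order terms again telescope and the terms `C(∇_· ·, ·)` cancel
by antisymmetry. What remains (`jacobiator_eq`) is

  `Σ_cyc defect(u, v) w^c - Σ_{a,b,d} u^a v^b w^d L^c_{abd}`,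

where `L` is the left-hand side of (L2) and the components of the defect measure the failure of
(L1). If both vanish, so does the Jacobiator. Conversely, constant frame sections isolate (L2), and
replacing the third one by `(y_i - x_i) ε_a`, which vanishes at `x` and has a single nonzero partial
derivative there, isolates the `i`-th component of the defect at `x`.
-/

/-- The `i`-th partial derivative of a function on `ℝ^n`. -/
noncomputable def pd {n : ℕ} (i : Fin n) (f : (Fin n → ℝ) → ℝ) : (Fin n → ℝ) → ℝ :=
  fun x => fderiv ℝ f x (Pi.single i 1)

/-- The bracket of two sections of the trivial bundle `ℝ^n × ℝ^r` determined by the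
anchor components `ρ^i_a` and structure functions `C^c_{ab}`:
`[e₁,e₂]^c = Σ_{i,a} ρ^i_a e₁^a ∂_i e₂^c − Σ_{i,a} ρ^i_a e₂^a ∂_i e₁^c + Σ_{a,b} C^c_{ab} e₁^a e₂^b`. -/
noncomputable def laBracket {n r : ℕ}
    (ρ : Fin n → Fin r → (Fin n → ℝ) → ℝ)
    (C : Fin r → Fin r → Fin r → (Fin n → ℝ) → ℝ)
    (e₁ e₂ : (Fin n → ℝ) → Fin r → ℝ) : (Fin n → ℝ) → Fin r → ℝ :=
  fun x c =>
    (∑ i, ∑ a, ρ i a x * e₁ x a * pd i (fun y => e₂ y c) x)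
      - (∑ i, ∑ a, ρ i a x * e₂ x a * pd i (fun y => e₁ y c) x)
      + ∑ a, ∑ b, C c a b x * e₁ x a * e₂ x b

/-- A smooth section of the trivial bundle `ℝ^n × ℝ^r`. -/
def SmoothSec {n r : ℕ} (e : (Fin n → ℝ) → Fin r → ℝ) : Prop :=
  ∀ a, ContDiff ℝ (⊤ : ℕ∞) (fun y => e y a)

/-- The derivative of `f` along the vector field `ρ(u)`, the image of the section `u` under the
anchor. -/
noncomputable def anchorD {n r : ℕ} (ρ : Fin n → Fin r → (Fin n → ℝ) → ℝ)
    (u : (Fin n → ℝ) → Fin r → ℝ) (f : (Fin n → ℝ) → ℝ) : (Fin n → ℝ) → ℝ :=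
  fun x => ∑ i, ∑ a, ρ i a x * u x a * pd i f x

/-- The section `∇_u v`, whose components are the derivatives of those of `v` along `ρ(u)`. -/
noncomputable def anchorSec {n r : ℕ} (ρ : Fin n → Fin r → (Fin n → ℝ) → ℝ)
    (u v : (Fin n → ℝ) → Fin r → ℝ) : (Fin n → ℝ) → Fin r → ℝ :=
  fun x a => anchorD ρ u (fun y => v y a) x

/-- The zeroth-order part `C(u, v)` of the bracket. -/
noncomputable def structSec {n r : ℕ} (C : Fin r → Fin r → Fin r → (Fin n → ℝ) → ℝ)
    (u v : (Fin n → ℝ) → Fin r → ℝ) : (Fin n → ℝ) → Fin r → ℝ :=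
  fun x c => ∑ a, ∑ b, C c a b x * u x a * v x b

/-- The components of `ρ([ε_a, ε_b]) - [ρ(ε_a), ρ(ε_b)]` for the standard frame `ε`: the defect
in (L1). -/
noncomputable def anchorDefect {n r : ℕ} (ρ : Fin n → Fin r → (Fin n → ℝ) → ℝ)
    (C : Fin r → Fin r → Fin r → (Fin n → ℝ) → ℝ) (i : Fin n) (a b : Fin r)
    (x : Fin n → ℝ) : ℝ :=
  (∑ c, C c a b x * ρ i c x) - ∑ j, (ρ j a x * pd j (ρ i b) x - ρ j b x * pd j (ρ i a) x)

/-- The `e`-component of `[ε_a, [ε_b, ε_c]]` for the standard frame `ε`: one of the three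
cyclically permuted summands of (L2). -/
noncomputable def frameNested {n r : ℕ} (ρ : Fin n → Fin r → (Fin n → ℝ) → ℝ)
    (C : Fin r → Fin r → Fin r → (Fin n → ℝ) → ℝ) (e a b c : Fin r) (x : Fin n → ℝ) : ℝ :=
  (∑ d, C e a d x * C d b c x) + ∑ j, ρ j a x * pd j (C e b c) x

/-- The anchor defect of two sections applied to a function. -/
noncomputable def defectD {n r : ℕ} (ρ : Fin n → Fin r → (Fin n → ℝ) → ℝ)
    (C : Fin r → Fin r → Fin r → (Fin n → ℝ) → ℝ)
    (u v : (Fin n → ℝ) → Fin r → ℝ) (f : (Fin n → ℝ) → ℝ) (x : Fin n → ℝ) : ℝ :=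
  ∑ i, ∑ a, ∑ b, u x a * v x b * anchorDefect ρ C i a b x * pd i f x

/-! ### Partial derivatives and derivatives along the anchor -/

section Calculus

variable {n r : ℕ} {ρ : Fin n → Fin r → (Fin n → ℝ) → ℝ}
  {C : Fin r → Fin r → Fin r → (Fin n → ℝ) → ℝ}
  {u v w : (Fin n → ℝ) → Fin r → ℝ} {f g : (Fin n → ℝ) → ℝ}

lemma contDiff_pd (hf : ContDiff ℝ (⊤ : ℕ∞) f) (i : Fin n) :
    ContDiff ℝ (⊤ : ℕ∞) (pd i f) := by
  unfold pd
  exact (hf.fderiv_right (m := (⊤ : ℕ∞)) (by simp)).clm_apply contDiff_const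

lemma diffAt (hf : ContDiff ℝ (⊤ : ℕ∞) f) (x : Fin n → ℝ) : DifferentiableAt ℝ f x :=
  hf.differentiable (by simp) x

lemma pd_comm (hf : ContDiff ℝ (⊤ : ℕ∞) f) (i j : Fin n) (x : Fin n → ℝ) :
    pd i (pd j f) x = pd j (pd i f) x := by
  have hd : DifferentiableAt ℝ (fderiv ℝ f) x :=
    (hf.fderiv_right (m := (⊤ : ℕ∞)) (by simp)).differentiable (by simp) x
  have h2 : ∀ k l : Fin n, pd k (pd l f) x
      = fderiv ℝ (fderiv ℝ f) x (Pi.single k 1) (Pi.single l 1) := by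
    intro k l
    unfold pd
    rw [fderiv_clm_apply hd (by fun_prop)]
    simp
  rw [h2, h2]
  have hs : IsSymmSndFDerivAt ℝ f x := by
    refine hf.contDiffAt.isSymmSndFDerivAt ?_
    simp only [minSmoothness_of_isRCLikeNormedField]
    exact WithTop.coe_le_coe.2 (le_top : (2 : ℕ∞) ≤ ⊤)
  exact hs _ _

lemma anchorD_eq (x : Fin n → ℝ) :
    anchorD ρ u f x = ∑ i, (∑ a, ρ i a x * u x a) * pd i f x := by
  simp [anchorD, Finset.sum_mul]

lemma contDiff_anchorD (hρ : ∀ i a, ContDiff ℝ (⊤ : ℕ∞) (ρ i a)) (hu : SmoothSec u)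
    (hf : ContDiff ℝ (⊤ : ℕ∞) f) : ContDiff ℝ (⊤ : ℕ∞) (anchorD ρ u f) := by
  unfold anchorD
  exact ContDiff.sum fun i _ => ContDiff.sum fun a _ =>
    ((hρ i a).mul (hu a)).mul (contDiff_pd hf i)

lemma contDiff_structSec (hC : ∀ c a b, ContDiff ℝ (⊤ : ℕ∞) (C c a b)) (hu : SmoothSec u)
    (hv : SmoothSec v) : SmoothSec (structSec C u v) := by
  intro c
  unfold structSec
  exact ContDiff.sum fun a _ => ContDiff.sum fun b _ => ((hC c a b).mul (hu a)).mul (hv b)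

lemma anchorD_add (hf : ContDiff ℝ (⊤ : ℕ∞) f) (hg : ContDiff ℝ (⊤ : ℕ∞) g) (x : Fin n → ℝ) :
    anchorD ρ u (fun y => f y + g y) x = anchorD ρ u f x + anchorD ρ u g x := by
  simp only [anchorD_eq, pd, fderiv_fun_add (diffAt hf x) (diffAt hg x), ← Finset.sum_add_distrib]
  simp [mul_add]

lemma anchorD_sub (hf : ContDiff ℝ (⊤ : ℕ∞) f) (hg : ContDiff ℝ (⊤ : ℕ∞) g) (x : Fin n → ℝ) :
    anchorD ρ u (fun y => f y - g y) x = anchorD ρ u f x - anchorD ρ u g x := by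
  simp only [anchorD_eq, pd, fderiv_fun_sub (diffAt hf x) (diffAt hg x), ← Finset.sum_sub_distrib]
  simp [mul_sub]

lemma anchorD_mul (hf : ContDiff ℝ (⊤ : ℕ∞) f) (hg : ContDiff ℝ (⊤ : ℕ∞) g) (x : Fin n → ℝ) :
    anchorD ρ u (fun y => f y * g y) x = anchorD ρ u f x * g x + f x * anchorD ρ u g x := by
  simp only [anchorD_eq, pd, fderiv_fun_mul (diffAt hf x) (diffAt hg x), Finset.sum_mul,
    Finset.mul_sum, ← Finset.sum_add_distrib]
  refine Finset.sum_congr rfl fun i _ => ?_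
  simp only [add_apply, smul_apply, smul_eq_mul]
  refine Finset.sum_congr rfl fun a _ => ?_
  ring

lemma anchorD_sum {ι : Type*} {s : Finset ι} {F : ι → (Fin n → ℝ) → ℝ}
    (hF : ∀ k, ContDiff ℝ (⊤ : ℕ∞) (F k)) (x : Fin n → ℝ) :
    anchorD ρ u (fun y => ∑ k ∈ s, F k y) x = ∑ k ∈ s, anchorD ρ u (F k) x := by
  simp only [anchorD_eq, pd, fderiv_fun_sum fun k _ => diffAt (hF k) x,
    sum_apply, Finset.mul_sum]
  rw [Finset.sum_comm]

lemma laBracket_eq (x : Fin n → ℝ) (c : Fin r) :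
    laBracket ρ C u v x c = anchorSec ρ u v x c - anchorSec ρ v u x c + structSec C u v x c := rfl

/-- The second-order operator `∇_u ∇_v f`, expanded by the Leibniz rule. -/
lemma anchorD_anchorD (hρ : ∀ i a, ContDiff ℝ (⊤ : ℕ∞) (ρ i a)) (hv : SmoothSec v)
    (hf : ContDiff ℝ (⊤ : ℕ∞) f) (x : Fin n → ℝ) :
    anchorD ρ u (anchorD ρ v f) x
      = (∑ i, ∑ b, anchorD ρ u (ρ i b) x * v x b * pd i f x)
        + anchorD ρ (anchorSec ρ u v) f x
        + ∑ i, ∑ b, ρ i b x * v x b * anchorD ρ u (pd i f) x := by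
  have h : anchorD ρ v f = fun y => ∑ i, ∑ b, ρ i b y * v y b * pd i f y := rfl
  rw [h, anchorD_sum fun i => ContDiff.sum fun b _ =>
    ((hρ i b).mul (hv b)).mul (contDiff_pd hf i)]
  conv_rhs => rw [anchorD]
  simp only [← Finset.sum_add_distrib]
  refine Finset.sum_congr rfl fun i _ => ?_
  rw [anchorD_sum fun b => ((hρ i b).mul (hv b)).mul (contDiff_pd hf i)]
  refine Finset.sum_congr rfl fun b _ => ?_
  rw [anchorD_mul ((hρ i b).mul (hv b)) (contDiff_pd hf i), anchorD_mul (hρ i b) (hv b)]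
  simp only [anchorSec]
  ring

/-- The second-order parts of `∇_u ∇_v f` and `∇_v ∇_u f` agree, by symmetry of second
derivatives. -/
lemma second_order_symm (hf : ContDiff ℝ (⊤ : ℕ∞) f) (x : Fin n → ℝ) :
    ∑ i, ∑ b, ρ i b x * v x b * anchorD ρ u (pd i f) x
      = ∑ i, ∑ b, ρ i b x * u x b * anchorD ρ v (pd i f) x := by
  simp only [anchorD_eq, ← Finset.sum_mul]
  simp only [Finset.mul_sum (s := (Finset.univ : Finset (Fin n)))]
  rw [Finset.sum_comm]
  refine Finset.sum_congr rfl fun i _ => Finset.sum_congr rfl fun j _ => ?_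
  rw [pd_comm hf i j]
  ring

/-- The derivatives of the anchor components along `ρ(u)`, expanded over the standard frame. -/
lemma frame_deriv_eq (i : Fin n) (x : Fin n → ℝ) (t : ℝ) :
    ∑ b, anchorD ρ u (ρ i b) x * v x b * t
      = ∑ a, ∑ b, u x a * v x b * (∑ j, ρ j a x * pd j (ρ i b) x) * t := by
  rw [Finset.sum_comm]
  refine Finset.sum_congr rfl fun b _ => ?_
  simp only [anchorD, Finset.sum_mul, Finset.mul_sum]
  rw [Finset.sum_comm]
  refine Finset.sum_congr rfl fun a _ => Finset.sum_congr rfl fun j _ => ?_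
  ring

/-! ### The Jacobiator -/

/-- The anchor defect measures the failure of the anchor to be a bracket homomorphism. -/
lemma anchorD_laBracket (hρ : ∀ i a, ContDiff ℝ (⊤ : ℕ∞) (ρ i a)) (hu : SmoothSec u)
    (hv : SmoothSec v) (hf : ContDiff ℝ (⊤ : ℕ∞) f) (x : Fin n → ℝ) :
    anchorD ρ (laBracket ρ C u v) f x
      = anchorD ρ u (anchorD ρ v f) x - anchorD ρ v (anchorD ρ u f) x
        + defectD ρ C u v f x := by
  rw [anchorD_anchorD hρ hv hf, anchorD_anchorD hρ hu hf, second_order_symm (u := u) (v := v) hf]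
  have h1 : anchorD ρ (laBracket ρ C u v) f x = anchorD ρ (anchorSec ρ u v) f x
      - anchorD ρ (anchorSec ρ v u) f x + anchorD ρ (structSec C u v) f x := by
    simp only [anchorD, laBracket_eq, ← Finset.sum_add_distrib, ← Finset.sum_sub_distrib]
    refine Finset.sum_congr rfl fun i _ => Finset.sum_congr rfl fun a _ => ?_
    ring
  have h2 : anchorD ρ (structSec C u v) f x
      = (∑ i, ∑ b, anchorD ρ u (ρ i b) x * v x b * pd i f x)
        - (∑ i, ∑ b, anchorD ρ v (ρ i b) x * u x b * pd i f x) + defectD ρ C u v f x := by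
    have h3 : anchorD ρ (structSec C u v) f x
        = ∑ i, ∑ a, ∑ b, u x a * v x b * (∑ c, C c a b x * ρ i c x) * pd i f x := by
      simp only [anchorD, structSec, Finset.sum_mul, Finset.mul_sum]
      refine Finset.sum_congr rfl fun i _ => ?_
      rw [Finset.sum_comm]
      refine Finset.sum_congr rfl fun a _ => ?_
      rw [Finset.sum_comm]
      refine Finset.sum_congr rfl fun b _ => Finset.sum_congr rfl fun c _ => ?_
      ring
    rw [h3, defectD]
    simp only [frame_deriv_eq]
    rw [← Finset.sum_sub_distrib, ← Finset.sum_add_distrib]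
    refine Finset.sum_congr rfl fun i _ => ?_
    rw [Finset.sum_comm (f := fun a b => v x a * u x b * (∑ j, ρ j a x * pd j (ρ i b) x) * pd i f x)]
    simp only [← Finset.sum_sub_distrib, ← Finset.sum_add_distrib]
    refine Finset.sum_congr rfl fun a _ => Finset.sum_congr rfl fun b _ => ?_
    rw [anchorDefect, Finset.sum_sub_distrib]
    ring
  rw [h1, h2]
  ring

/-- The Leibniz rule for the zeroth-order part of the bracket. -/
lemma anchorD_structSec (hC : ∀ c a b, ContDiff ℝ (⊤ : ℕ∞) (C c a b)) (hu : SmoothSec u)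
    (hv : SmoothSec v) (c : Fin r) (x : Fin n → ℝ) :
    anchorD ρ w (fun y => structSec C u v y c) x
      = (∑ a, ∑ b, anchorD ρ w (C c a b) x * u x a * v x b)
        + structSec C (anchorSec ρ w u) v x c + structSec C u (anchorSec ρ w v) x c := by
  simp only [structSec]
  rw [anchorD_sum fun a => ContDiff.sum fun b _ => ((hC c a b).mul (hu a)).mul (hv b)]
  simp only [← Finset.sum_add_distrib]
  refine Finset.sum_congr rfl fun a _ => ?_
  rw [anchorD_sum fun b => ((hC c a b).mul (hu a)).mul (hv b)]
  refine Finset.sum_congr rfl fun b _ => ?_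
  rw [anchorD_mul ((hC c a b).mul (hu a)) (hv b), anchorD_mul (hC c a b) (hu a)]
  simp only [anchorSec]
  ring

lemma structSec_antisymm (hCanti : ∀ c a b x, C c a b x = - C c b a x) (c : Fin r)
    (x : Fin n → ℝ) : structSec C u v x c = - structSec C v u x c := by
  simp only [structSec]
  rw [Finset.sum_comm]
  simp only [← Finset.sum_neg_distrib]
  refine Finset.sum_congr rfl fun a _ => Finset.sum_congr rfl fun b _ => ?_
  rw [hCanti c b a]
  ring

lemma structSec_laBracket (c : Fin r) (x : Fin n → ℝ) :
    structSec C (laBracket ρ C u v) w x c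
      = structSec C (anchorSec ρ u v) w x c - structSec C (anchorSec ρ v u) w x c
        + structSec C (structSec C u v) w x c := by
  rw [structSec, structSec, structSec, structSec]
  simp only [laBracket_eq, ← Finset.sum_add_distrib, ← Finset.sum_sub_distrib]
  refine Finset.sum_congr rfl fun a _ => Finset.sum_congr rfl fun b _ => ?_
  ring

/-- Contracted with three sections, one summand of (L2) is `C(u, C(v, w))` plus the derivative of the
structure functions along `ρ(u)`. -/
lemma frameNested_sum (c : Fin r) (x : Fin n → ℝ) :
    ∑ a, ∑ b, ∑ d, u x a * v x b * w x d * frameNested ρ C c a b d x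
      = structSec C u (structSec C v w) x c
        + ∑ b, ∑ d, anchorD ρ u (C c b d) x * v x b * w x d := by
  have h1 : structSec C u (structSec C v w) x c
      = ∑ a, ∑ b, ∑ d, u x a * v x b * w x d * ∑ e, C c a e x * C e b d x := by
    simp only [structSec, Finset.mul_sum]
    refine Finset.sum_congr rfl fun a _ => ?_
    rw [Finset.sum_comm]
    refine Finset.sum_congr rfl fun b _ => ?_
    rw [Finset.sum_comm]
    refine Finset.sum_congr rfl fun d _ => Finset.sum_congr rfl fun e _ => ?_
    ring
  have h2 : ∑ b, ∑ d, anchorD ρ u (C c b d) x * v x b * w x d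
      = ∑ a, ∑ b, ∑ d, u x a * v x b * w x d * ∑ j, ρ j a x * pd j (C c b d) x := by
    rw [Finset.sum_comm]
    refine Eq.symm ?_
    rw [Finset.sum_comm_cycle]
    refine Finset.sum_congr rfl fun d _ => ?_
    rw [Finset.sum_comm]
    refine Finset.sum_congr rfl fun b _ => ?_
    simp only [anchorD, Finset.mul_sum, Finset.sum_mul]
    rw [Finset.sum_comm]
    refine Finset.sum_congr rfl fun j _ => Finset.sum_congr rfl fun a _ => ?_
    ring
  rw [h1, h2]
  simp only [← Finset.sum_add_distrib]
  refine Finset.sum_congr rfl fun a _ => Finset.sum_congr rfl fun b _ =>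
    Finset.sum_congr rfl fun d _ => ?_
  rw [frameNested]
  ring

/-- One cyclic summand of the Jacobiator. -/
lemma laBracket_laBracket (hρ : ∀ i a, ContDiff ℝ (⊤ : ℕ∞) (ρ i a))
    (hC : ∀ c a b, ContDiff ℝ (⊤ : ℕ∞) (C c a b)) (hu : SmoothSec u) (hv : SmoothSec v)
    (hw : SmoothSec w) (x : Fin n → ℝ) (c : Fin r) :
    laBracket ρ C (laBracket ρ C u v) w x c
      = anchorD ρ u (anchorD ρ v fun y => w y c) x - anchorD ρ v (anchorD ρ u fun y => w y c) x
        + defectD ρ C u v (fun y => w y c) x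
        - (anchorD ρ w (anchorD ρ u fun y => v y c) x
          - anchorD ρ w (anchorD ρ v fun y => u y c) x
          + ((∑ a, ∑ b, anchorD ρ w (C c a b) x * u x a * v x b)
            + structSec C (anchorSec ρ w u) v x c + structSec C u (anchorSec ρ w v) x c))
        + (structSec C (anchorSec ρ u v) w x c - structSec C (anchorSec ρ v u) w x c
          + structSec C (structSec C u v) w x c) := by
  rw [laBracket_eq, structSec_laBracket, ← anchorD_structSec hC hu hv,
    ← anchorD_laBracket hρ hu hv (hw c)]
  have h1 := contDiff_anchorD hρ hu (hv c)
  have h2 := contDiff_anchorD hρ hv (hu c)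
  have h3 : anchorSec ρ w (laBracket ρ C u v) x c
      = anchorD ρ w (fun y => anchorD ρ u (fun y => v y c) y - anchorD ρ v (fun y => u y c) y
          + structSec C u v y c) x := rfl
  rw [h3, anchorD_add (h1.sub h2) (contDiff_structSec hC hu hv c), anchorD_sub h1 h2]
  rfl

/-- The Jacobiator is a sum of the (L1) defect, acting as a first-order operator in each argument,
and the (L2) expression, acting as a tensor. -/
lemma jacobiator_eq (hρ : ∀ i a, ContDiff ℝ (⊤ : ℕ∞) (ρ i a))
    (hC : ∀ c a b, ContDiff ℝ (⊤ : ℕ∞) (C c a b))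
    (hCanti : ∀ c a b x, C c a b x = - C c b a x) (hu : SmoothSec u) (hv : SmoothSec v)
    (hw : SmoothSec w) (x : Fin n → ℝ) (c : Fin r) :
    laBracket ρ C (laBracket ρ C u v) w x c + laBracket ρ C (laBracket ρ C v w) u x c
        + laBracket ρ C (laBracket ρ C w u) v x c
      = defectD ρ C u v (fun y => w y c) x + defectD ρ C v w (fun y => u y c) x
        + defectD ρ C w u (fun y => v y c) x
        - ∑ a, ∑ b, ∑ d, u x a * v x b * w x d *
          (frameNested ρ C c a b d x + frameNested ρ C c b d a x + frameNested ρ C c d a b x) := by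
  have hT : ∑ a, ∑ b, ∑ d, u x a * v x b * w x d *
          (frameNested ρ C c a b d x + frameNested ρ C c b d a x + frameNested ρ C c d a b x)
      = (∑ a, ∑ b, ∑ d, u x a * v x b * w x d * frameNested ρ C c a b d x)
        + (∑ a, ∑ b, ∑ d, v x a * w x b * u x d * frameNested ρ C c a b d x)
        + (∑ a, ∑ b, ∑ d, w x a * u x b * v x d * frameNested ρ C c a b d x) := by
    rw [Finset.sum_comm_cycle (f := fun a b d => v x a * w x b * u x d * frameNested ρ C c a b d x)]
    rw [← Finset.sum_comm_cycle (f := fun b d a => w x a * u x b * v x d * frameNested ρ C c a b d x)]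
    simp only [← Finset.sum_add_distrib]
    refine Finset.sum_congr rfl fun a _ => Finset.sum_congr rfl fun b _ =>
      Finset.sum_congr rfl fun d _ => ?_
    ring
  rw [hT, frameNested_sum, frameNested_sum, frameNested_sum,
    laBracket_laBracket hρ hC hu hv hw, laBracket_laBracket hρ hC hv hw hu,
    laBracket_laBracket hρ hC hw hu hv]
  have A : ∀ p q, structSec C p q x c = - structSec C q p x c :=
    fun p q => structSec_antisymm hCanti c x
  rw [A (structSec C u v) w, A (structSec C v w) u, A (structSec C w u) v,
    A (anchorSec ρ w u) v, A (anchorSec ρ u v) w, A (anchorSec ρ v w) u,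
    A (anchorSec ρ v u) w, A (anchorSec ρ w v) u, A (anchorSec ρ u w) v]
  ring

end Calculus

/-! ### Test sections -/

lemma pd_const {n : ℕ} (i : Fin n) (t : ℝ) (x : Fin n → ℝ) : pd i (fun _ => t) x = 0 := by
  simp [pd]

lemma pd_coord {n : ℕ} (i j : Fin n) (s : ℝ) (x : Fin n → ℝ) :
    pd i (fun y => y j - s) x = if i = j then 1 else 0 := by
  have h : HasFDerivAt (fun y : Fin n → ℝ => y j - s)
      (ContinuousLinearMap.proj j : (Fin n → ℝ) →L[ℝ] ℝ) x :=
    (hasFDerivAt_apply j x).sub_const s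
  rw [pd, h.fderiv]
  simp [Pi.single_apply, eq_comm]

/-- The Jacobi identity for the bracket `laBracket ρ C` holds for all smooth
sections if and only if the Lie algebroid structure identities (L1) and (L2) hold. -/
theorem jacobi_iff_lie_algebroid_identities (n r : ℕ)
    (ρ : Fin n → Fin r → (Fin n → ℝ) → ℝ)
    (C : Fin r → Fin r → Fin r → (Fin n → ℝ) → ℝ)
    (hρ : ∀ i a, ContDiff ℝ (⊤ : ℕ∞) (ρ i a))
    (hC : ∀ c a b, ContDiff ℝ (⊤ : ℕ∞) (C c a b))
    (hCanti : ∀ c a b x, C c a b x = - C c b a x) :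
    (∀ e₁ e₂ e₃ : (Fin n → ℝ) → Fin r → ℝ,
        SmoothSec e₁ → SmoothSec e₂ → SmoothSec e₃ →
        ∀ x c,
          laBracket ρ C (laBracket ρ C e₁ e₂) e₃ x c
            + laBracket ρ C (laBracket ρ C e₂ e₃) e₁ x c
            + laBracket ρ C (laBracket ρ C e₃ e₁) e₂ x c = 0)
      ↔ ((∀ i a b x,
            (∑ j, (ρ j a x * pd j (ρ i b) x - ρ j b x * pd j (ρ i a) x))
              = ∑ c, C c a b x * ρ i c x)
          ∧ (∀ e a b c x,
            ((∑ d, C e a d x * C d b c x) + ∑ j, ρ j a x * pd j (C e b c) x)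
              + ((∑ d, C e b d x * C d c a x) + ∑ j, ρ j b x * pd j (C e c a) x)
              + ((∑ d, C e c d x * C d a b x) + ∑ j, ρ j c x * pd j (C e a b) x) = 0)) := by
  constructor
  · intro J
    have hconst : ∀ a : Fin r,
        SmoothSec (fun (_ : Fin n → ℝ) => (Pi.single a 1 : Fin r → ℝ)) :=
      fun a b => contDiff_const
    have hL2 : ∀ e a b c x, frameNested ρ C e a b c x + frameNested ρ C e b c a x
        + frameNested ρ C e c a b x = 0 := by
      intro e a b c x
      have h := J _ _ _ (hconst a) (hconst b) (hconst c) x e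
      rw [jacobiator_eq hρ hC hCanti (hconst a) (hconst b) (hconst c)] at h
      simpa [defectD, pd_const, Pi.single_apply, -neg_add_rev] using h
    refine ⟨?_, hL2⟩
    intro i a b x
    -- This section vanishes at `x`, which kills all terms of the Jacobiator but the defect.
    have hlin : SmoothSec (fun (y : Fin n → ℝ) (c : Fin r) =>
        (y i - x i) * (Pi.single a 1 : Fin r → ℝ) c) := by
      intro c
      exact ((contDiff_apply ℝ ℝ i).sub contDiff_const).mul contDiff_const
    have h := J _ _ _ (hconst a) (hconst b) hlin x a
    rw [jacobiator_eq hρ hC hCanti (hconst a) (hconst b) hlin] at h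
    have h' : anchorDefect ρ C i a b x = 0 := by
      simpa [defectD, pd_const, pd_coord, Pi.single_apply] using h
    rw [anchorDefect] at h'
    linarith
  · rintro ⟨h1, h2⟩ u v w hu hv hw x c
    have hA : ∀ i a b, anchorDefect ρ C i a b x = 0 := fun i a b => by
      rw [anchorDefect, h1, sub_self]
    have hB : ∀ a b d, frameNested ρ C c a b d x + frameNested ρ C c b d a x
        + frameNested ρ C c d a b x = 0 := fun a b d => h2 c a b d x
    rw [jacobiator_eq hρ hC hCanti hu hv hw]
    simp [defectD, hA, hB]
end

section
/- Let n, r be natural numbers and let ρ^i_a, C^c_{ab} be a rank-r anchored structure on ℝ^n (smooth, with C^c_{ab} = −C^c_{ba}). For m ≥ 0, an A-m-form is a family of smooth functions η_{a₁…a_m} : ℝ^n → ℝ totally antisymmetric in its indices a₁,…,a_m < r. Define the A-differential by (ᴬdη)_{a₀…a_m} := Σ_{p=0}^{m} (−1)^p Σ_j ρ^j_{a_p} ∂_j η_{a₀…â_p…a_m} + Σ_{0≤p<q≤m} (−1)^{p+q} Σ_c C^c_{a_p a_q} η_{c a₀…â_p…â_q…a_m} (hats denote omitted indices). Then ᴬd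 ∘ ᴬd = 0 on all A-m-forms for all m if and only if the identities (L1): Σ_j (ρ^j_a ∂_j ρ^i_b − ρ^j_b ∂_j ρ^i_a) = Σ_c C^c_{ab} ρ^i_c and (L2): Σ_d C^e_{ad} C^d_{bc} + Σ_j ρ^j_a ∂_j C^e_{bc} + (cyclic permutations of (a,b,c)) = 0 hold. -/
/-- The Lie algebroid differential (A-differential) of an A-`m`-form, with components
`(ᴬdη)_{a₀…a_m} = Σ_p (−1)^p Σ_j ρ^j_{a_p} ∂_j η_{a₀…â_p…a_m}
  + Σ_{p<q} (−1)^{p+q} Σ_c C^c_{a_p a_q} η_{c a₀…â_p…â_q…a_m}`. -/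
noncomputable def laDiff {n r : ℕ}
    (ρ : Fin n → Fin r → (Fin n → ℝ) → ℝ)
    (C : Fin r → Fin r → Fin r → (Fin n → ℝ) → ℝ) {m : ℕ}
    (η : (Fin m → Fin r) → (Fin n → ℝ) → ℝ) :
    (Fin (m + 1) → Fin r) → (Fin n → ℝ) → ℝ :=
  fun a x =>
    (∑ p : Fin (m + 1),
        (-1 : ℝ) ^ (p : ℕ) * ∑ j, ρ j (a p) x * pd j (η (fun k => a (p.succAbove k))) x)
      + ∑ p : Fin (m + 1), ∑ q : Fin (m + 1),
          if hpq : p < q then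
            have hm : m - 1 + 1 = m := by
              have h1 : (p : ℕ) < (q : ℕ) := hpq
              have h2 : (q : ℕ) < m + 1 := q.isLt
              omega
            (-1 : ℝ) ^ ((p : ℕ) + (q : ℕ)) *
              ∑ c, C c (a p) (a q) x *
                η (fun k =>
                    (Fin.cons c
                      (fun k'' : Fin (m - 1) =>
                        a (p.succAbove (Fin.cast hm
                          ((Fin.cast hm.symm
                              (q.pred (by
                                intro h0
                                rw [h0] at hpq
                                exact absurd hpq (by simp [Fin.lt_def])))).succAbove k'')))) :
                      Fin (m - 1 + 1) → Fin r)
                      (Fin.cast hm.symm k)) x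
          else 0

/-- Total antisymmetry of an indexed family of functions. -/
def TotAntisymm {m : ℕ} {κ X : Type*} (η : (Fin m → κ) → X → ℝ) : Prop :=
  ∀ σ : Equiv.Perm (Fin m), ∀ a x, η (a ∘ σ) x = ((Equiv.Perm.sign σ : ℤ) : ℝ) * η a x

namespace LieAlgd

/-- Families of elements of `R` indexed by `m`-tuples of frame indices. Antisymmetry is not part of
the type; it is the predicate `Alt`. -/
abbrev Form (ι R : Type*) (m : ℕ) := (Fin m → ι) → R

/-! ### Forms and contractions -/

section Algebra

variable {ι R : Type*} [CommRing R] [Algebra ℝ R]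

/-- Contraction of the first slot with the frame element `e_b`. -/
def ins {m : ℕ} (b : ι) : Form ι R (m + 1) →ₗ[ℝ] Form ι R m where
  toFun ω := fun a => ω (Fin.cons b a)
  map_add' _ _ := rfl
  map_smul' _ _ := rfl

theorem ins_apply {m : ℕ} (b : ι) (ω : Form ι R (m + 1)) (a : Fin m → ι) :
    ins b ω a = ω (Fin.cons b a) := rfl

theorem ins_smul {m : ℕ} (b : ι) (f : R) (ω : Form ι R (m + 1)) :
    ins b (f • ω) = f • ins b ω := rfl

/-- A form of positive degree is determined by its contractions with the frame. -/
theorem ext_ins {m : ℕ} {ω ω' : Form ι R (m + 1)} (h : ∀ b, ins b ω = ins b ω') : ω = ω' := by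
  funext a
  rw [← Fin.cons_self_tail a]
  exact congrFun (h (a 0)) (Fin.tail a)

/-- The map into `(m + 1)`-forms whose contraction with `e_b` is `F b`. -/
def glue {M : Type*} [AddCommGroup M] [Module ℝ M] {m : ℕ} (F : ι → M →ₗ[ℝ] Form ι R m) :
    M →ₗ[ℝ] Form ι R (m + 1) where
  toFun v := fun a => F (a 0) v (Fin.tail a)
  map_add' v w := by funext a; simp
  map_smul' c v := by funext a; simp

theorem ins_glue {M : Type*} [AddCommGroup M] [Module ℝ M] {m : ℕ}
    (F : ι → M →ₗ[ℝ] Form ι R m) (b : ι) (v : M) : ins b (glue F v) = F b v := by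
  funext a
  simp [ins_apply, glue]

/-! ### Alternating families -/

/-- Alternating families: every contraction is alternating and the first two slots
anticommute. Since adjacent transpositions generate the symmetric group, this is total
antisymmetry, in a form suited to induction on the degree. -/
def Alt : (m : ℕ) → Form ι R m → Prop
  | 0, _ => True
  | 1, _ => True
  | m + 2, ω => (∀ b, Alt (m + 1) (ins b ω)) ∧ ∀ a b, ins a (ins b ω) = -ins b (ins a ω)

theorem Alt.ins {m : ℕ} {ω : Form ι R (m + 1)} (h : Alt (m + 1) ω) (b : ι) : Alt m (ins b ω) := by
  cases m with
  | zero => trivial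
  | succ m => exact h.1 b

theorem alt_zero (m : ℕ) : Alt m (0 : Form ι R m) := by
  induction m with
  | zero => trivial
  | succ m ih =>
    cases m with
    | zero => trivial
    | succ m => exact ⟨fun b => by simpa using ih, fun a b => by simp⟩

theorem Alt.add {m : ℕ} {ω η : Form ι R m} (h : Alt m ω) (h' : Alt m η) : Alt m (ω + η) := by
  induction m with
  | zero => trivial
  | succ m ih =>
    cases m with
    | zero => trivial
    | succ m =>
      refine ⟨fun b => by simpa using ih (h.1 b) (h'.1 b), fun a b => ?_⟩
      simp only [map_add, h.2 a b, h'.2 a b]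
      abel

theorem Alt.smul {m : ℕ} {ω : Form ι R m} (f : R) (h : Alt m ω) : Alt m (f • ω) := by
  induction m with
  | zero => trivial
  | succ m ih =>
    cases m with
    | zero => trivial
    | succ m =>
      refine ⟨fun b => by simpa only [ins_smul] using ih (h.1 b), fun a b => ?_⟩
      simp only [ins_smul, h.2 a b, smul_neg]

theorem Alt.sub {m : ℕ} {ω η : Form ι R m} (h : Alt m ω) (h' : Alt m η) : Alt m (ω - η) := by
  have := h.add (h'.smul (-1))
  rwa [neg_one_smul, ← sub_eq_add_neg] at this

theorem alt_sum {m : ℕ} {κ : Type*} (s : Finset κ) (ω : κ → Form ι R m) (h : ∀ k, Alt m (ω k)) :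
    Alt m (∑ k ∈ s, ω k) := by
  classical
  induction s using Finset.induction_on with
  | empty => simpa using alt_zero m
  | insert k s hk ih => rw [Finset.sum_insert hk]; exact (h k).add ih

theorem Alt.swap {m : ℕ} {ω : Form ι R (m + 2)} (h : Alt (m + 2) ω) (a b : ι) (t : Fin m → ι) :
    ω (Fin.cons a (Fin.cons b t)) = -ω (Fin.cons b (Fin.cons a t)) :=
  congrFun (h.2 b a) t

theorem cons_zero_removeNth {m : ℕ} (b : ι) (a : Fin m → ι) :
    (0 : Fin (m + 1)).removeNth (Fin.cons b a : Fin (m + 1) → ι) = a := rfl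

theorem cons_succ_removeNth {m : ℕ} (b : ι) (a : Fin (m + 1) → ι) (p : Fin (m + 1)) :
    p.succ.removeNth (Fin.cons b a : Fin (m + 2) → ι) = Fin.cons b (p.removeNth a) := by
  funext k
  refine Fin.cases ?_ (fun k => ?_) k <;> simp [Fin.removeNth]

/-! ### Lie derivative and differential -/

variable [Fintype ι] (δ : ι → Derivation ℝ R R) (C : ι → ι → ι → R)

/-- The Lie derivative along the frame element `e_b`, defined by recursion on the degree through
`[i_a, L_b] = -∑_c C^c_{ba} i_c`. -/
def lie (b : ι) : (m : ℕ) → Form ι R m →ₗ[ℝ] Form ι R m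
  | 0 => (δ b : R →ₗ[ℝ] R).compLeft _
  | m + 1 => glue fun a => lie b m ∘ₗ ins a - ∑ c, C c b a • ins c

/-- The differential, defined through Cartan's formula `i_b d = L_b - d i_b`; see `dif_apply` for
its values in terms of omitted indices. -/
def dif : (m : ℕ) → Form ι R m →ₗ[ℝ] Form ι R (m + 1)
  | 0 => glue fun b => lie δ C b 0
  | m + 1 => glue fun b => lie δ C b (m + 1) - dif m ∘ₗ ins b

theorem lie_zero (b : ι) (ω : Form ι R 0) (a : Fin 0 → ι) :
    lie δ C b 0 ω a = δ b (ω a) := rfl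

theorem ins_lie (a b : ι) {m : ℕ} (ω : Form ι R (m + 1)) :
    ins a (lie δ C b (m + 1) ω) = lie δ C b m (ins a ω) - ∑ c, C c b a • ins c ω := by
  rw [lie, ins_glue]
  simp

theorem ins_dif_zero (b : ι) (ω : Form ι R 0) : ins b (dif δ C 0 ω) = lie δ C b 0 ω := by
  rw [dif, ins_glue]

theorem ins_dif (b : ι) {m : ℕ} (ω : Form ι R (m + 1)) :
    ins b (dif δ C (m + 1) ω) = lie δ C b (m + 1) ω - dif δ C m (ins b ω) := by
  rw [dif, ins_glue]
  rfl

theorem lie_smul (b : ι) {m : ℕ} (f : R) (ω : Form ι R m) :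
    lie δ C b m (f • ω) = δ b f • ω + f • lie δ C b m ω := by
  induction m with
  | zero =>
    funext a
    simp [lie_zero, mul_comm, add_comm]
  | succ m ih =>
    refine ext_ins fun a => ?_
    simp only [map_add, ins_smul, ins_lie, ih, smul_sub, Finset.smul_sum, smul_comm f]
    abel

theorem Alt.lie (b : ι) {m : ℕ} {ω : Form ι R m} (h : Alt m ω) : Alt m (lie δ C b m ω) := by
  induction m with
  | zero => trivial
  | succ m ih =>
    cases m with
    | zero => trivial
    | succ m =>
      refine ⟨fun a => ?_, fun a e => ?_⟩
      · rw [ins_lie]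
        exact (ih (h.1 a)).sub (alt_sum _ _ fun c => (h.1 c).smul _)
      · simp only [ins_lie, map_sub, map_sum, ins_smul]
        simp only [h.2 a, h.2 _ e, map_neg, smul_neg, Finset.sum_neg_distrib]
        abel

theorem Alt.dif (hC : ∀ c a b, C c a b = -C c b a) {m : ℕ} {ω : Form ι R m} (h : Alt m ω) : Alt (m + 1) (dif δ C m ω) := by
  induction m with
  | zero => trivial
  | succ m ih =>
    refine ⟨fun b => ?_, fun a b => ?_⟩
    · rw [ins_dif]
      exact (h.lie δ C b).sub (ih (h.ins b))
    · cases m with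
      | zero =>
        simp only [ins_dif, ins_lie, map_sub, ins_dif_zero, hC _ a b, neg_smul,
          Finset.sum_neg_distrib]
        abel
      | succ m =>
        simp only [ins_dif, ins_lie, map_sub, hC _ a b, neg_smul, h.2 a b,
          Finset.sum_neg_distrib, map_neg]
        abel

/-- The Jacobi identity for the structure functions, paired with a family `v`; this is the
contribution of the terms `∑ C ∑ C i_d ω` and `∑ (δ C) i_d ω` in the induction step of
`lie_comm`. -/
theorem jacobi_smul {M : Type*} [AddCommGroup M] [Module R M] (hC : ∀ c a b, C c a b = -C c b a)
    (hJ : ∀ e a b c, ((∑ d, C e a d * C d b c) + δ a (C e b c))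
      + ((∑ d, C e b d * C d c a) + δ b (C e c a))
      + ((∑ d, C e c d * C d a b) + δ c (C e a b)) = 0) (a b e : ι) (v : ι → M) :
    (∑ c, δ a (C c b e) • v c) - (∑ c, δ b (C c a e) • v c)
      + (∑ c, C c b e • ∑ d, C d a c • v d) - (∑ c, C c a e • ∑ d, C d b c • v d)
      = (∑ c, δ e (C c b a) • v c) - ∑ c, C c b a • ∑ d, C d c e • v d := by
  -- Collect the double sums by the index of `v`, so that the claim holds coefficientwise.
  have swap : ∀ (X : ι → R) (Y : ι → ι → R),
      ∑ c, X c • ∑ d, Y d c • v d = ∑ d, (∑ c, Y d c * X c) • v d := by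
    intro X Y
    simp only [Finset.smul_sum, Finset.sum_smul, smul_smul]
    rw [Finset.sum_comm]
    simp only [mul_comm]
  rw [swap, swap, swap]
  simp only [← Finset.sum_sub_distrib, ← Finset.sum_add_distrib, ← sub_smul, ← add_smul]
  refine Finset.sum_congr rfl fun d _ => ?_
  congr 1
  have h1 : ∑ c, C d b c * C c e a = -∑ c, C d b c * C c a e := by
    rw [← Finset.sum_neg_distrib]
    exact Finset.sum_congr rfl fun c _ => by rw [hC c e a]; ring
  have h2 : ∑ c, C d e c * C c a b = ∑ c, C d c e * C c b a :=
    Finset.sum_congr rfl fun c _ => by rw [hC d e c, hC c a b]; ring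
  have h3 : δ b (C d e a) = -δ b (C d a e) := by rw [hC d e a, map_neg]
  have h4 : δ e (C d a b) = -δ e (C d b a) := by rw [hC d a b, map_neg]
  have := hJ d a b e
  rw [h1, h2, h3, h4] at this
  linear_combination this

/-- The degree-zero case of `lie_comm`, where the term `d i` is absent. -/
theorem lie_comm_zero (hδ : ∀ a b f, δ a (δ b f) - δ b (δ a f) = ∑ c, C c a b * δ c f)
    (a b : ι) (ω : Form ι R 0) :
    lie δ C b 0 (lie δ C a 0 ω) - lie δ C a 0 (lie δ C b 0 ω)
      = ∑ c, C c b a • ins c (dif δ C 0 ω) := by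
  funext t
  simp [ins_dif_zero, lie_zero, hδ]

/-- `[L_b, L_a]` is the Lie derivative along `[e_b, e_a] = ∑_c C^c_{ba} e_c`, written as
`i d + d i`. The coefficients `C^c_{ba}` are functions, so they stay inside `d` in the second
term. -/
theorem lie_comm (hC : ∀ c a b, C c a b = -C c b a)
    (hδ : ∀ a b f, δ a (δ b f) - δ b (δ a f) = ∑ c, C c a b * δ c f)
    (hJ : ∀ e a b c, ((∑ d, C e a d * C d b c) + δ a (C e b c))
      + ((∑ d, C e b d * C d c a) + δ b (C e c a))
      + ((∑ d, C e c d * C d a b) + δ c (C e a b)) = 0)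
    (a b : ι) {m : ℕ} {ω : Form ι R (m + 1)} (h : Alt (m + 1) ω) :
    lie δ C b (m + 1) (lie δ C a (m + 1) ω) - lie δ C a (m + 1) (lie δ C b (m + 1) ω)
      = (∑ c, C c b a • ins c (dif δ C (m + 1) ω)) + dif δ C m (∑ c, C c b a • ins c ω) := by
  induction m with
  | zero =>
    refine ext_ins fun e => ?_
    have ih := lie_comm_zero δ C hδ a b (ins e ω)
    have hj := jacobi_smul δ C hC hJ a b e (fun c => ins c ω)
    simp only [ins_lie, ins_dif, ins_dif_zero, map_sub, map_sum, map_add, ins_smul, lie_smul,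
      Finset.sum_add_distrib, smul_sub, Finset.sum_sub_distrib] at ih hj ⊢
    linear_combination (exp := 1) ih + hj
  | succ m ih =>
    refine ext_ins fun e => ?_
    have ih := ih (h.1 e)
    have hj := jacobi_smul δ C hC hJ a b e (fun c => ins c ω)
    simp only [ins_lie, ins_dif, map_sub, map_sum, map_add, ins_smul, lie_smul, h.2 e,
      map_neg, smul_neg, Finset.sum_neg_distrib,
      Finset.sum_add_distrib, smul_sub, Finset.sum_sub_distrib] at ih hj ⊢
    linear_combination (exp := 1) ih + hj

/-- The Lie derivatives along the frame commute with the differential. -/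
theorem lie_dif (hC : ∀ c a b, C c a b = -C c b a)
    (hδ : ∀ a b f, δ a (δ b f) - δ b (δ a f) = ∑ c, C c a b * δ c f)
    (hJ : ∀ e a b c, ((∑ d, C e a d * C d b c) + δ a (C e b c))
      + ((∑ d, C e b d * C d c a) + δ b (C e c a))
      + ((∑ d, C e c d * C d a b) + δ c (C e a b)) = 0)
    (b : ι) {m : ℕ} {ω : Form ι R m} (h : Alt m ω) :
    lie δ C b (m + 1) (dif δ C m ω) = dif δ C m (lie δ C b m ω) := by
  induction m with
  | zero =>
    refine ext_ins fun a => ?_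
    have hc := lie_comm_zero δ C hδ a b ω
    simp only [ins_lie, ins_dif_zero] at hc ⊢
    linear_combination (exp := 1) hc
  | succ m ih =>
    refine ext_ins fun a => ?_
    have hc := lie_comm δ C hC hδ hJ a b h
    have ih := ih (h.ins a)
    rw [ins_lie, ins_dif, ins_dif, ins_lie, map_sub, map_sub, ih]
    linear_combination (exp := 1) hc

theorem dif_dif (hC : ∀ c a b, C c a b = -C c b a)
    (hδ : ∀ a b f, δ a (δ b f) - δ b (δ a f) = ∑ c, C c a b * δ c f)
    (hJ : ∀ e a b c, ((∑ d, C e a d * C d b c) + δ a (C e b c))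
      + ((∑ d, C e b d * C d c a) + δ b (C e c a))
      + ((∑ d, C e c d * C d a b) + δ c (C e a b)) = 0)
    {m : ℕ} {ω : Form ι R m} (h : Alt m ω) : dif δ C (m + 1) (dif δ C m ω) = 0 := by
  induction m with
  | zero =>
    refine ext_ins fun b => ?_
    rw [ins_dif, ins_dif_zero, lie_dif δ C hC hδ hJ b h, sub_self, map_zero]
  | succ m ih =>
    refine ext_ins fun b => ?_
    rw [ins_dif, ins_dif, lie_dif δ C hC hδ hJ b h, map_sub, ih (h.ins b), sub_zero, sub_self,
      map_zero]

/-- The Lie derivative of an alternating form, with the replaced index moved to the first slot. -/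
theorem lie_apply (b : ι) {m : ℕ} {ω : Form ι R (m + 1)} (h : Alt (m + 1) ω)
    (a : Fin (m + 1) → ι) :
    lie δ C b (m + 1) ω a = δ b (ω a)
      - ∑ q : Fin (m + 1), (-1) ^ (q : ℕ) * ∑ c, C c b (a q) * ω (Fin.cons c (q.removeNth a)) := by
  induction m with
  | zero =>
    cases a using Fin.consCases with | _ e t
    rw [← ins_apply e (lie δ C b _ ω) t, ins_lie]
    simp [lie_zero, ins_apply]
  | succ m ih =>
    cases a using Fin.consCases with | _ e t
    rw [← ins_apply e (lie δ C b _ ω) t, ins_lie, Fin.sum_univ_succ]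
    simp only [Pi.sub_apply, ih (h.1 e) t, cons_zero_removeNth, cons_succ_removeNth, ins_apply,
      h.swap e, Finset.sum_apply, Pi.smul_apply, smul_eq_mul, Fin.cons_zero, Fin.cons_succ,
      Fin.val_zero, Fin.val_succ, pow_succ, pow_zero, mul_neg, mul_one, neg_mul, one_mul,
      Finset.sum_neg_distrib]
    ring

theorem dif_apply_zero (ω : Form ι R 0) (a : Fin 1 → ι) :
    dif δ C 0 ω a = δ (a 0) (ω (Fin.tail a)) := rfl

/-- The differential in terms of omitted indices. The pairs `p < s` of the usual formula are
encoded as `s = q.succ` with `p ≤ q.castSucc`, which accounts for the sign `-(-1) ^ (p + q)`. -/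
theorem dif_apply {m : ℕ} {ω : Form ι R (m + 1)}
    (h : Alt (m + 1) ω) (a : Fin (m + 2) → ι) :
    dif δ C (m + 1) ω a
      = (∑ p : Fin (m + 2), (-1) ^ (p : ℕ) * δ (a p) (ω (p.removeNth a)))
        + ∑ p : Fin (m + 2), ∑ q : Fin (m + 1), if p ≤ q.castSucc then
            -(-1) ^ ((p : ℕ) + (q : ℕ)) * ∑ c, C c (a p) (a q.succ) *
              ω (Fin.cons c (q.removeNth (p.removeNth a))) else 0 := by
  induction m with
  | zero =>
    cases a using Fin.consCases with | _ b t
    rw [← ins_apply b (dif δ C _ ω) t, ins_dif]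
    simp [lie_apply δ C b h t, dif_apply_zero, Fin.sum_univ_succ, ins_apply,
      cons_succ_removeNth, Fin.removeNth_zero]
    ring
  | succ m ih =>
    cases a using Fin.consCases with | _ b t
    rw [← ins_apply b (dif δ C _ ω) t, ins_dif, Pi.sub_apply, lie_apply δ C b h t, ih (h.1 b) t,
      Fin.sum_univ_succ (n := m + 2), Fin.sum_univ_succ (n := m + 2)]
    -- For two omitted tail slots, moving `b` past the inserted `c` gives `-d (i_b ω)`.
    have key : ∀ p : Fin (m + 2), (∑ q : Fin (m + 2), if p.succ ≤ q.castSucc then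
            -(-1) ^ ((p.succ : ℕ) + (q : ℕ)) * ∑ c, C c ((Fin.cons b t : Fin (m + 3) → ι) p.succ)
              ((Fin.cons b t : Fin (m + 3) → ι) q.succ) *
              ω (Fin.cons c (q.removeNth (p.succ.removeNth (Fin.cons b t : Fin (m + 3) → ι)))) else 0)
        = - ∑ q : Fin (m + 1), if p ≤ q.castSucc then
            -(-1) ^ ((p : ℕ) + (q : ℕ)) * ∑ c, C c (t p) (t q.succ) *
              ins b ω (Fin.cons c (q.removeNth (p.removeNth t))) else 0 := by
      intro p
      rw [Fin.sum_univ_succ, if_neg (by simp), zero_add, ← Finset.sum_neg_distrib]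
      refine Finset.sum_congr rfl fun q _ => ?_
      simp only [Fin.castSucc_succ, Fin.succ_le_succ_iff]
      split_ifs
      · simp only [cons_succ_removeNth, ins_apply, h.swap b, Fin.cons_succ, mul_neg,
          Finset.sum_neg_distrib, Fin.val_succ]
        ring
      · simp
    rw [Finset.sum_congr rfl fun p _ => key p]
    simp only [cons_zero_removeNth, cons_succ_removeNth, ins_apply, Fin.cons_zero, Fin.cons_succ,
      Fin.val_zero, Fin.val_succ, pow_succ, pow_zero, mul_neg, mul_one, neg_mul, one_mul, zero_add,
      Finset.sum_neg_distrib, Fin.zero_le, if_true]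
    ring

end Algebra

/-! ### Identities forced by the vanishing of the squared differential -/

section Converse

variable {ι R : Type*} [Fintype ι] [CommRing R] [Algebra ℝ R]
variable (δ : ι → Derivation ℝ R R) (C : ι → ι → ι → R)

theorem anchor_of_dif_dif (f : R) (h : dif δ C 1 (dif δ C 0 fun _ => f) = 0) (a b : ι) :
    δ a (δ b f) - δ b (δ a f) = ∑ c, C c a b * δ c f := by
  have h := congrFun (congrArg (fun ω => ins b (ins a ω)) h) Fin.elim0
  simp [ins_lie, ins_dif, ins_dif_zero, lie_zero] at h
  linear_combination h

/-- The Jacobi identity is read off from `d d = 0` on the constant one-form dual to `e_e`. -/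
theorem jacobi_of_dif_dif [DecidableEq ι] (hC : ∀ c a b, C c a b = -C c b a) (e : ι)
    (h : dif δ C 2 (dif δ C 1 fun t => if t 0 = e then 1 else 0) = 0) (a b c : ι) :
    ((∑ d, C e a d * C d b c) + δ a (C e b c))
      + ((∑ d, C e b d * C d c a) + δ b (C e c a))
      + ((∑ d, C e c d * C d a b) + δ c (C e a b)) = 0 := by
  set ω : Form ι R 1 := fun t => if t 0 = e then 1 else 0 with hω
  have hins : ∀ d t, ins d ω t = if d = e then 1 else 0 := fun d t => rfl
  -- The components of `ω` are constants, so only derivatives of the structure functions survive.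
  have hlie : ∀ d d', lie δ C d' 0 (ins d ω) = 0 := by
    intro d d'
    funext t
    rw [lie_zero, hins]
    split_ifs <;> simp
  have h := congrFun (congrArg (fun ω => ins c (ins b (ins a ω))) h) Fin.elim0
  simp only [ins_lie, ins_dif, ins_dif_zero, map_sub, map_sum, ins_smul, lie_smul, hlie] at h
  simp [hins] at h
  have h1 : ∑ d, C d a c * C e b d = -∑ d, C e b d * C d c a := by
    rw [← Finset.sum_neg_distrib]
    exact Finset.sum_congr rfl fun d _ => by rw [hC d a c]; ring
  have h2 : ∑ d, C d a b * C e d c = -∑ d, C e c d * C d a b := by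
    rw [← Finset.sum_neg_distrib]
    exact Finset.sum_congr rfl fun d _ => by rw [hC e d c]; ring
  have h3 : ∑ d, C d b c * C e a d = ∑ d, C e a d * C d b c :=
    Finset.sum_congr rfl fun d _ => mul_comm _ _
  rw [h1, h2, h3, hC e a c, map_neg] at h
  linear_combination -h

end Converse

/-! ### Smooth functions on `ℝ^n` and comparison with `laDiff` -/

section Smooth

/-- The algebra of smooth functions on `ℝ^n`. -/
def smooth (n : ℕ) : Subalgebra ℝ ((Fin n → ℝ) → ℝ) where
  carrier := {f | ContDiff ℝ (⊤ : ℕ∞) f}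
  mul_mem' {f g} hf hg := by
    rw [Set.mem_ofPred_eq] at hf hg ⊢
    exact hf.mul hg
  add_mem' {f g} hf hg := by
    rw [Set.mem_ofPred_eq] at hf hg ⊢
    exact hf.add hg
  algebraMap_mem' c := by
    rw [Set.mem_ofPred_eq]
    exact contDiff_const (c := c)

variable {n r : ℕ}

theorem smooth_contDiff (f : smooth n) : ContDiff ℝ (⊤ : ℕ∞) (f : (Fin n → ℝ) → ℝ) := f.2

theorem smooth_differentiableAt (f : smooth n) (x : Fin n → ℝ) :
    DifferentiableAt ℝ (f : (Fin n → ℝ) → ℝ) x :=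
  ((smooth_contDiff f).differentiable (by simp)) x

theorem contDiff_pd (i : Fin n) {f : (Fin n → ℝ) → ℝ} (hf : ContDiff ℝ (⊤ : ℕ∞) f) :
    ContDiff ℝ (⊤ : ℕ∞) (pd i f) :=
  (hf.fderiv_right (by simp)).clm_apply contDiff_const

/-- The partial derivative as a derivation of the algebra of smooth functions. -/
noncomputable def pdS (i : Fin n) : Derivation ℝ (smooth n) (smooth n) :=
  Derivation.mk'
    { toFun := fun f => ⟨pd i f, contDiff_pd i (smooth_contDiff f)⟩
      map_add' := fun f g => by
        ext x
        exact congrArg (fun L => L (Pi.single i 1))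
          (fderiv_add (smooth_differentiableAt f x) (smooth_differentiableAt g x))
      map_smul' := fun c f => by
        ext x
        exact congrArg (fun L => L (Pi.single i 1))
          (fderiv_const_smul (smooth_differentiableAt f x) c) }
    fun f g => by
      ext x
      have := congrArg (fun L => L (Pi.single i 1))
          (fderiv_mul (smooth_differentiableAt f x) (smooth_differentiableAt g x))
      exact this

theorem pdS_coe (i : Fin n) (f : smooth n) : (pdS i f : (Fin n → ℝ) → ℝ) = pd i f := rfl

/-- Symmetry of second derivatives. -/
theorem pdS_comm (i j : Fin n) (f : smooth n) : pdS i (pdS j f) = pdS j (pdS i f) := by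
  ext x
  -- The derivative of a directional derivative, in terms of the second derivative.
  have h2 : ∀ v w : Fin n → ℝ, fderiv ℝ (fun y => fderiv ℝ (f : (Fin n → ℝ) → ℝ) y v) x w
      = fderiv ℝ (fderiv ℝ (f : (Fin n → ℝ) → ℝ)) x w v := by
    intro v w
    have hd : DifferentiableAt ℝ (fderiv ℝ (f : (Fin n → ℝ) → ℝ)) x :=
      (((smooth_contDiff f).fderiv_right (m := (⊤ : ℕ∞)) (by simp)).differentiable (by simp)) x
    rw [fderiv_clm_apply hd (by fun_prop)]
    simp
  have hs : IsSymmSndFDerivAt ℝ (f : (Fin n → ℝ) → ℝ) x :=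
    ((smooth_contDiff f).contDiffAt).isSymmSndFDerivAt (by
      rw [minSmoothness_of_isRCLikeNormedField]
      exact WithTop.coe_le_coe.2 (le_top : (2 : ℕ∞) ≤ ⊤))
  exact (h2 _ _).trans ((hs _ _).trans (h2 _ _).symm)

/-- The derivation `∑ⱼ ρʲ_a ∂ⱼ`. -/
noncomputable def anc (ρ : Fin n → Fin r → smooth n) (a : Fin r) :
    Derivation ℝ (smooth n) (smooth n) := ∑ j, ρ j a • pdS j

theorem anc_apply (ρ : Fin n → Fin r → smooth n) (a : Fin r) (f : smooth n) :
    anc ρ a f = ∑ j, ρ j a * pdS j f := by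
  rw [anc, ← Derivation.coeFnAddMonoidHom_apply, map_sum, Finset.sum_apply]
  rfl

/-- (L1) says that the anchor maps brackets of frame elements to commutators; the second-order
terms of the commutator cancel by `pdS_comm`. -/
theorem anc_comm (ρ : Fin n → Fin r → smooth n) (C : Fin r → Fin r → Fin r → smooth n)
    (h : ∀ i a b, ∑ j, (ρ j a * pdS j (ρ i b) - ρ j b * pdS j (ρ i a)) = ∑ c, C c a b * ρ i c)
    (a b : Fin r) (f : smooth n) :
    anc ρ a (anc ρ b f) - anc ρ b (anc ρ a f) = ∑ c, C c a b * anc ρ c f := by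
  have e : ∀ a b, anc ρ a (anc ρ b f) = (∑ i, (∑ j, ρ j a * pdS j (ρ i b)) * pdS i f)
      + ∑ i, ∑ j, ρ j a * ρ i b * pdS j (pdS i f) := by
    intro a b
    simp only [anc_apply, map_sum, Derivation.leibniz, smul_eq_mul, Finset.mul_sum,
      Finset.sum_mul]
    rw [← Finset.sum_add_distrib]
    refine Finset.sum_congr rfl fun i _ => ?_
    rw [← Finset.sum_add_distrib, ← Finset.sum_add_distrib]
    exact Finset.sum_congr rfl fun j _ => by ring
  have s : ∑ i, ∑ j, ρ j b * ρ i a * pdS j (pdS i f)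
      = ∑ i, ∑ j, ρ j a * ρ i b * pdS j (pdS i f) := by
    rw [Finset.sum_comm]
    exact Finset.sum_congr rfl fun i _ => Finset.sum_congr rfl fun j _ => by
      rw [pdS_comm]; ring
  rw [e, e, s, add_sub_add_right_eq_sub, ← Finset.sum_sub_distrib]
  simp only [← sub_mul, ← Finset.sum_sub_distrib, h, anc_apply]
  simp only [Finset.mul_sum, Finset.sum_mul]
  rw [Finset.sum_comm]
  simp only [mul_assoc]

/-- The `i`-th coordinate as a smooth function. -/
def coord (i : Fin n) : smooth n := ⟨fun x => x i, show ContDiff ℝ (⊤ : ℕ∞) _ from contDiff_apply ℝ ℝ i⟩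

theorem pdS_coord (i j : Fin n) : pdS j (coord i) = if j = i then 1 else 0 := by
  ext x
  change fderiv ℝ (fun x : Fin n → ℝ => x i) x (Pi.single j 1) = _
  rw [fderiv_apply (by fun_prop)]
  split_ifs with h
  · subst h; simp
  · simp [Ne.symm h]

theorem anc_coord (ρ : Fin n → Fin r → smooth n) (a : Fin r) (i : Fin n) :
    anc ρ a (coord i) = ρ i a := by
  simp [anc_apply, pdS_coord]

theorem alt_of_totAntisymm {m : ℕ} (ω : Form (Fin r) (smooth n) m)
    (h : TotAntisymm fun a => (ω a : (Fin n → ℝ) → ℝ)) : Alt m ω := by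
  induction m with
  | zero => trivial
  | succ m ih =>
    have hi : ∀ b, Alt m (ins b ω) := by
      refine fun b => ih _ fun σ a x => ?_
      -- Extend `σ` by fixing the first slot.
      have := h (Equiv.Perm.decomposeFin.symm (0, σ)) (Fin.cons b a) x
      rw [Equiv.Perm.decomposeFin.symm_sign] at this
      simp only [if_true, one_mul] at this
      change (ω (Fin.cons b (a ∘ σ)) : (Fin n → ℝ) → ℝ) x
        = _ * (ω (Fin.cons b a) : (Fin n → ℝ) → ℝ) x
      rw [← this]
      have e : (Fin.cons b (a ∘ σ) : Fin (m + 1) → Fin r)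
          = Fin.cons b a ∘ Equiv.Perm.decomposeFin.symm (0, σ) := by
        funext k
        refine Fin.cases ?_ (fun k => ?_) k <;> simp
      rw [e]
    cases m with
    | zero => trivial
    | succ m =>
      refine ⟨hi, fun a b => ?_⟩
      funext t
      ext x
      have := h (Equiv.swap 0 1) (Fin.cons a (Fin.cons b t)) x
      rw [Equiv.Perm.sign_swap (by simp)] at this
      have e : (Fin.cons a (Fin.cons b t) : Fin (m + 2) → Fin r) ∘ Equiv.swap 0 1
          = Fin.cons b (Fin.cons a t) := by
        funext k
        refine Fin.cases ?_ (fun k => Fin.cases ?_ (fun k => ?_) k) k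
        · simp
        · simp
        · simp [Equiv.swap_apply_of_ne_of_ne, Fin.ext_iff]
      rw [e] at this
      simpa [ins_apply] using this

/-- On alternating families of smooth functions, `laDiff` is the recursively defined differential. -/
theorem laDiff_coe (ρ : Fin n → Fin r → smooth n) (C : Fin r → Fin r → Fin r → smooth n)
    {m : ℕ} {ω : Form (Fin r) (smooth n) m} (h : Alt m ω) :
    laDiff (fun j a => (ρ j a : (Fin n → ℝ) → ℝ)) (fun c a b => (C c a b : (Fin n → ℝ) → ℝ))
      (fun a => (ω a : (Fin n → ℝ) → ℝ)) = fun a => (dif (anc ρ) C m ω a : (Fin n → ℝ) → ℝ) := by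
  funext a x
  cases m with
  | zero =>
    rw [dif_apply_zero, anc_apply]
    simp [laDiff, pdS_coe]
    rfl
  | succ m =>
    rw [dif_apply _ _ h, laDiff]
    simp only [anc_apply, AddMemClass.coe_add, AddSubmonoidClass.coe_finsetSum, Pi.add_apply,
      Finset.sum_apply, MulMemClass.coe_mul, Pi.mul_apply, pdS_coe]
    congr 1
    refine Finset.sum_congr rfl fun p _ => ?_
    -- The summand `q = 0` never satisfies `p < q`, so the sum runs over successors.
    rw [Fin.sum_univ_succ, dif_neg (by simp), zero_add]
    refine Finset.sum_congr rfl fun q _ => ?_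
    by_cases hpq : p ≤ q.castSucc
    · rw [if_pos hpq, dif_pos (Fin.le_castSucc_iff.1 hpq)]
      simp [pow_succ, ← add_assoc]
      rfl
    · rw [if_neg hpq, dif_neg (fun h => hpq (Fin.le_castSucc_iff.2 h))]
      rfl

theorem structure_iff (ρ : Fin n → Fin r → smooth n) (C : Fin r → Fin r → Fin r → smooth n) :
    ((∀ i a b x,
        (∑ j, ((ρ j a : (Fin n → ℝ) → ℝ) x * pd j (ρ i b) x
          - (ρ j b : (Fin n → ℝ) → ℝ) x * pd j (ρ i a) x))
          = ∑ c, (C c a b : (Fin n → ℝ) → ℝ) x * (ρ i c : (Fin n → ℝ) → ℝ) x)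
      ↔ ∀ i a b,
        ∑ j, (ρ j a * pdS j (ρ i b) - ρ j b * pdS j (ρ i a)) = ∑ c, C c a b * ρ i c) := by
  refine forall_congr' fun i => forall_congr' fun a => forall_congr' fun b => ?_
  rw [← Subtype.coe_inj, funext_iff]
  simp only [AddSubgroupClass.coe_sub, AddSubmonoidClass.coe_finsetSum, Pi.sub_apply,
    Finset.sum_apply, MulMemClass.coe_mul, Pi.mul_apply, pdS_coe]

theorem jacobi_iff (ρ : Fin n → Fin r → smooth n) (C : Fin r → Fin r → Fin r → smooth n) :
    (∀ e a b c x,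
      ((∑ d, (C e a d : (Fin n → ℝ) → ℝ) x * (C d b c : (Fin n → ℝ) → ℝ) x)
          + ∑ j, (ρ j a : (Fin n → ℝ) → ℝ) x * pd j (C e b c) x)
        + ((∑ d, (C e b d : (Fin n → ℝ) → ℝ) x * (C d c a : (Fin n → ℝ) → ℝ) x)
          + ∑ j, (ρ j b : (Fin n → ℝ) → ℝ) x * pd j (C e c a) x)
        + ((∑ d, (C e c d : (Fin n → ℝ) → ℝ) x * (C d a b : (Fin n → ℝ) → ℝ) x)
          + ∑ j, (ρ j c : (Fin n → ℝ) → ℝ) x * pd j (C e a b) x) = 0)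
      ↔ ∀ e a b c, ((∑ d, C e a d * C d b c) + anc ρ a (C e b c))
        + ((∑ d, C e b d * C d c a) + anc ρ b (C e c a))
        + ((∑ d, C e c d * C d a b) + anc ρ c (C e a b)) = 0 := by
  refine forall_congr' fun e => forall_congr' fun a => forall_congr' fun b =>
    forall_congr' fun c => ?_
  rw [← Subtype.coe_inj, funext_iff]
  simp only [anc_apply, AddMemClass.coe_add, AddSubmonoidClass.coe_finsetSum, Pi.add_apply,
    Finset.sum_apply, MulMemClass.coe_mul, Pi.mul_apply, pdS_coe, ZeroMemClass.coe_zero,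
    Pi.zero_apply]

theorem laDiff_laDiff_coe (ρ : Fin n → Fin r → smooth n) (C : Fin r → Fin r → Fin r → smooth n)
    (hC : ∀ c a b, C c a b = -C c b a) {m : ℕ} {ω : Form (Fin r) (smooth n) m} (h : Alt m ω) :
    (∀ a x, laDiff (fun j a => (ρ j a : (Fin n → ℝ) → ℝ))
        (fun c a b => (C c a b : (Fin n → ℝ) → ℝ))
        (laDiff (fun j a => (ρ j a : (Fin n → ℝ) → ℝ)) (fun c a b => (C c a b : (Fin n → ℝ) → ℝ))
          fun a => (ω a : (Fin n → ℝ) → ℝ)) a x = 0)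
      ↔ dif (anc ρ) C (m + 1) (dif (anc ρ) C m ω) = 0 := by
  rw [laDiff_coe ρ C h, laDiff_coe ρ C (h.dif (anc ρ) C hC), funext_iff]
  refine forall_congr' fun a => ?_
  rw [← Subtype.coe_inj, funext_iff]
  rfl

theorem totAntisymm_of_subsingleton {m : ℕ} [Subsingleton (Equiv.Perm (Fin m))] {κ X : Type*}
    (η : (Fin m → κ) → X → ℝ) : TotAntisymm η := fun σ a x => by
  simp [Subsingleton.elim σ 1]

end Smooth
end LieAlgd

/-- `ᴬd ∘ ᴬd = 0` on all smooth A-`m`-forms, for all `m`,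
if and only if the Lie algebroid structure identities (L1) and (L2) hold. -/
theorem laDiff_squared_zero_iff_lie_algebroid_identities (n r : ℕ)
    (ρ : Fin n → Fin r → (Fin n → ℝ) → ℝ)
    (C : Fin r → Fin r → Fin r → (Fin n → ℝ) → ℝ)
    (hρ : ∀ i a, ContDiff ℝ (⊤ : ℕ∞) (ρ i a))
    (hC : ∀ c a b, ContDiff ℝ (⊤ : ℕ∞) (C c a b))
    (hCanti : ∀ c a b x, C c a b x = - C c b a x) :
    (∀ (m : ℕ) (η : (Fin m → Fin r) → (Fin n → ℝ) → ℝ),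
        (∀ b, ContDiff ℝ (⊤ : ℕ∞) (η b)) → TotAntisymm η →
        ∀ a x, laDiff ρ C (laDiff ρ C η) a x = 0)
      ↔ ((∀ i a b x,
            (∑ j, (ρ j a x * pd j (ρ i b) x - ρ j b x * pd j (ρ i a) x))
              = ∑ c, C c a b x * ρ i c x)
          ∧ (∀ e a b c x,
            ((∑ d, C e a d x * C d b c x) + ∑ j, ρ j a x * pd j (C e b c) x)
              + ((∑ d, C e b d x * C d c a x) + ∑ j, ρ j b x * pd j (C e c a) x)
              + ((∑ d, C e c d x * C d a b x) + ∑ j, ρ j c x * pd j (C e a b) x) = 0)) := by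
  let ρ' : Fin n → Fin r → LieAlgd.smooth n := fun i a => ⟨ρ i a, hρ i a⟩
  let C' : Fin r → Fin r → Fin r → LieAlgd.smooth n := fun c a b => ⟨C c a b, hC c a b⟩
  have hC' : ∀ c a b, C' c a b = -C' c b a := fun c a b =>
    Subtype.ext (funext fun x => hCanti c a b x)
  refine Iff.trans ?_ (and_congr (LieAlgd.structure_iff ρ' C') (LieAlgd.jacobi_iff ρ' C')).symm
  constructor
  · intro H
    have H' : ∀ {m : ℕ} (ω : LieAlgd.Form (Fin r) (LieAlgd.smooth n) m),
        TotAntisymm (fun a => (ω a : (Fin n → ℝ) → ℝ)) →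
        LieAlgd.dif (LieAlgd.anc ρ') C' (m + 1) (LieAlgd.dif (LieAlgd.anc ρ') C' m ω) = 0 :=
      fun ω ht => (LieAlgd.laDiff_laDiff_coe ρ' C' hC' (LieAlgd.alt_of_totAntisymm ω ht)).1
        (H _ _ (fun b => LieAlgd.smooth_contDiff (ω b)) ht)
    refine ⟨fun i a b => ?_, fun e => ?_⟩
    · have := LieAlgd.anchor_of_dif_dif (LieAlgd.anc ρ') C' (LieAlgd.coord i)
        (H' _ (LieAlgd.totAntisymm_of_subsingleton _)) a b
      simp only [LieAlgd.anc_coord] at this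
      rwa [LieAlgd.anc_apply, LieAlgd.anc_apply, ← Finset.sum_sub_distrib] at this
    · exact LieAlgd.jacobi_of_dif_dif (LieAlgd.anc ρ') C' hC' e
        (H' _ (LieAlgd.totAntisymm_of_subsingleton _))
  · rintro ⟨hL1, hL2⟩ m η hη ht
    have h : LieAlgd.Alt m (fun a => (⟨η a, hη a⟩ : LieAlgd.smooth n)) :=
      LieAlgd.alt_of_totAntisymm _ ht
    exact (LieAlgd.laDiff_laDiff_coe ρ' C' hC' h).2
      (LieAlgd.dif_dif (LieAlgd.anc ρ') C' hC' (LieAlgd.anc_comm ρ' C' hL1) hL2 h)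
end

section
/- On ℝ^n let H_{ijk} : ℝ^n → ℝ be smooth and totally antisymmetric. A generalized section is a pair (u, α) of smooth maps u : ℝ^n → ℝ^n and α : ℝ^n → ℝ^n. Define the H-twisted Dorfman bracket [(u,α),(v,β)] := (w, γ) with w^i := Σ_j (u^j ∂_j v^i − v^j ∂_j u^i) and γ_i := Σ_j u^j ∂_j β_i + Σ_j β_j ∂_i u^j − Σ_j v^j (∂_j α_i − ∂_i α_j) + Σ_{j,k} u^j v^k H_{jki}. Then the Leibniz identity [e₁,[e₂,e₃]] = [[e₁,e₂],e₃] + [e₂,[e₁,e₃]] holds for all generalized sections e₁, e₂, e₃ if and only if H is closed, i.e. ∂_i H_{jkl} − ∂_j H_{ikl} + ∂_k H_{ijl} − ∂_l H_{ijk} = 0 for all i,j,k,l. Moreover, for every totally antisymmetric H the remaining Courant algebroid axioms hold: with anchor ρ(u,α) := u, pairing ⟨(u,α),(v,β)⟩ := Σ_i (u^i β_i + v^i α_i) and 𝒟f := (0, df), one has ρ([e₁,e₂]) = [ρ(e₁),ρ(e₂)] (commutator of vector fields), [e₁, f e₂] = f [e₁,e₂] + (ρ(e₁)f) e₂, [e,e]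 = ½ 𝒟⟨e,e⟩, and ρ(e₁)⟨e₂,e₃⟩ = ⟨[e₁,e₂],e₃⟩ + ⟨e₂,[e₁,e₃]⟩. -/
/-- A generalized section of `Tℝ^n ⊕ T*ℝ^n`: a pair `(u, α)` of a vector field and a 1-form. -/
abbrev GSec (n : ℕ) :=
  ((Fin n → ℝ) → Fin n → ℝ) × ((Fin n → ℝ) → Fin n → ℝ)

/-- Smoothness of a generalized section. -/
def SmoothGSec {n : ℕ} (e : GSec n) : Prop :=
  (∀ i, ContDiff ℝ (⊤ : ℕ∞) (fun x => e.1 x i)) ∧ (∀ i, ContDiff ℝ (⊤ : ℕ∞) (fun x => e.2 x i))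

/-- The `H`-twisted Dorfman bracket
`[(u,α),(v,β)] = ([u,v], L_u β − ι_v dα + ι_u ι_v H)` in components. -/
noncomputable def dorfman {n : ℕ} (H : Fin n → Fin n → Fin n → (Fin n → ℝ) → ℝ)
    (e₁ e₂ : GSec n) : GSec n :=
  (fun x i => ∑ j, (e₁.1 x j * pd j (fun y => e₂.1 y i) x
      - e₂.1 x j * pd j (fun y => e₁.1 y i) x),
   fun x i =>
    (∑ j, e₁.1 x j * pd j (fun y => e₂.2 y i) x)
      + (∑ j, e₂.2 x j * pd i (fun y => e₁.1 y j) x)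
      - (∑ j, e₂.1 x j * (pd j (fun y => e₁.2 y i) x - pd i (fun y => e₁.2 y j) x))
      + ∑ j, ∑ k, e₁.1 x j * e₂.1 x k * H j k i x)

/-- The pairing `⟨(u,α),(v,β)⟩ = Σ_i (u^i β_i + v^i α_i)`. -/
def gPair {n : ℕ} (e₁ e₂ : GSec n) : (Fin n → ℝ) → ℝ :=
  fun x => ∑ i, (e₁.1 x i * e₂.2 x i + e₂.1 x i * e₁.2 x i)

/-! ### The twisted Dorfman bracket on a normed space -/

section Invariant

open VectorField

set_option maxSynthPendingDepth 3

variable {E : Type*} [NormedAddCommGroup E] [NormedSpace ℝ E]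

/-- The 1-form part `L_u β − ι_v dα + ι_u ι_v H` of the `H`-twisted Dorfman bracket of `(u, α)` and
`(v, β)` on a normed space, with 1-forms and the 3-form `H` as (nested) continuous linear maps.
No antisymmetry is built into `H`. -/
noncomputable def formBracket (H : E → E →L[ℝ] E →L[ℝ] E →L[ℝ] ℝ) (u : E → E) (α : E → E →L[ℝ] ℝ)
    (v : E → E) (β : E → E →L[ℝ] ℝ) (x : E) : E →L[ℝ] ℝ :=
  fderiv ℝ β x (u x) + (β x).comp (fderiv ℝ u x) - fderiv ℝ α x (v x)
    + (fderiv ℝ α x).flip (v x) + H x (u x) (v x)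

variable {H : E → E →L[ℝ] E →L[ℝ] E →L[ℝ] ℝ} {u v w : E → E} {α β γ : E → E →L[ℝ] ℝ}

lemma formBracket_apply (x z : E) :
    formBracket H u α v β x z = fderiv ℝ β x (u x) z + β x (fderiv ℝ u x z) - fderiv ℝ α x (v x) z
      + fderiv ℝ α x z (v x) + H x (u x) (v x) z := by
  simp [formBracket]

lemma contDiff_fderiv_top {F : Type*} [NormedAddCommGroup F] [NormedSpace ℝ F] {f : E → F}
    (hf : ContDiff ℝ (⊤ : ℕ∞) f) : ContDiff ℝ (⊤ : ℕ∞) (fderiv ℝ f) :=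
  hf.fderiv_right (by simp)

lemma ContDiff.hasFDerivAt_top {F : Type*} [NormedAddCommGroup F] [NormedSpace ℝ F] {f : E → F}
    (hf : ContDiff ℝ (⊤ : ℕ∞) f) (x : E) : HasFDerivAt f (fderiv ℝ f x) x :=
  (hf.differentiable (by simp) x).hasFDerivAt

lemma contDiff_formBracket (hH : ContDiff ℝ (⊤ : ℕ∞) H) (hu : ContDiff ℝ (⊤ : ℕ∞) u)
    (hα : ContDiff ℝ (⊤ : ℕ∞) α) (hv : ContDiff ℝ (⊤ : ℕ∞) v) (hβ : ContDiff ℝ (⊤ : ℕ∞) β) :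
    ContDiff ℝ (⊤ : ℕ∞) (formBracket H u α v β) := by
  have hflip : ContDiff ℝ (⊤ : ℕ∞) (fun x => (fderiv ℝ α x).flip) :=
    (ContinuousLinearMap.flipₗᵢ ℝ E E ℝ).contDiff.comp (contDiff_fderiv_top hα)
  exact (((((contDiff_fderiv_top hβ).clm_apply hu).add (hβ.clm_comp (contDiff_fderiv_top hu))).sub
    ((contDiff_fderiv_top hα).clm_apply hv)).add (hflip.clm_apply hv)).add
    ((hH.clm_apply hu).clm_apply hv)

/-- Leibniz rule for evaluating a 1-form on a vector field. -/
lemma fderiv_form_apply (hα : ContDiff ℝ (⊤ : ℕ∞) α) (hv : ContDiff ℝ (⊤ : ℕ∞) v) (x a : E) :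
    fderiv ℝ (fun y => α y (v y)) x a = fderiv ℝ α x a (v x) + α x (fderiv ℝ v x a) := by
  rw [((hα.hasFDerivAt_top x).clm_apply (hv.hasFDerivAt_top x)).fderiv]
  simp [add_comm]

lemma fderiv_formBracket_apply (hH : ContDiff ℝ (⊤ : ℕ∞) H) (hu : ContDiff ℝ (⊤ : ℕ∞) u)
    (hα : ContDiff ℝ (⊤ : ℕ∞) α) (hv : ContDiff ℝ (⊤ : ℕ∞) v) (hβ : ContDiff ℝ (⊤ : ℕ∞) β)
    (x a z : E) :
    fderiv ℝ (formBracket H u α v β) x a z =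
      fderiv ℝ (fderiv ℝ β) x a (u x) z + fderiv ℝ β x (fderiv ℝ u x a) z
      + fderiv ℝ β x a (fderiv ℝ u x z) + β x (fderiv ℝ (fderiv ℝ u) x a z)
      - fderiv ℝ (fderiv ℝ α) x a (v x) z - fderiv ℝ α x (fderiv ℝ v x a) z
      + fderiv ℝ (fderiv ℝ α) x a z (v x) + fderiv ℝ α x z (fderiv ℝ v x a)
      + fderiv ℝ H x a (u x) (v x) z + H x (fderiv ℝ u x a) (v x) z
      + H x (u x) (fderiv ℝ v x a) z := by
  have h1 : fderiv ℝ (formBracket H u α v β) x a z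
      = fderiv ℝ (fun y => formBracket H u α v β y z) x a := by
    rw [fderiv_form_apply (contDiff_formBracket hH hu hα hv hβ) contDiff_const]
    simp
  have hz := hasFDerivAt_const (𝕜 := ℝ) z x
  have Hu := hu.hasFDerivAt_top x
  have Hv := hv.hasFDerivAt_top x
  have Hα' := (contDiff_fderiv_top hα).hasFDerivAt_top x
  have Hβ' := (contDiff_fderiv_top hβ).hasFDerivAt_top x
  have Hu' := (contDiff_fderiv_top hu).hasFDerivAt_top x
  have key := ((((((Hβ'.clm_apply Hu).clm_apply hz).add
    ((hβ.hasFDerivAt_top x).clm_apply (Hu'.clm_apply hz))).sub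
    ((Hα'.clm_apply Hv).clm_apply hz)).add ((Hα'.clm_apply hz).clm_apply Hv)).add
    ((((hH.hasFDerivAt_top x).clm_apply Hu).clm_apply Hv).clm_apply hz))
  have h2 : (fun y => formBracket H u α v β y z) = fun y =>
      fderiv ℝ β y (u y) z + β y (fderiv ℝ u y z) - fderiv ℝ α y (v y) z
      + fderiv ℝ α y z (v y) + H y (u y) (v y) z := funext fun y => formBracket_apply y z
  rw [h1, h2]
  refine (congrArg (fun L : E →L[ℝ] ℝ => L a) key.fderiv).trans ?_
  simp
  ring

lemma contDiff_lieBracket_top (hu : ContDiff ℝ (⊤ : ℕ∞) u) (hv : ContDiff ℝ (⊤ : ℕ∞) v) :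
    ContDiff ℝ (⊤ : ℕ∞) (lieBracket ℝ u v) :=
  ((contDiff_fderiv_top hv).clm_apply hu).sub ((contDiff_fderiv_top hu).clm_apply hv)

lemma fderiv_lieBracket_apply (hu : ContDiff ℝ (⊤ : ℕ∞) u) (hv : ContDiff ℝ (⊤ : ℕ∞) v) (x a : E) :
    fderiv ℝ (lieBracket ℝ u v) x a =
      fderiv ℝ (fderiv ℝ v) x a (u x) + fderiv ℝ v x (fderiv ℝ u x a)
      - fderiv ℝ (fderiv ℝ u) x a (v x) - fderiv ℝ u x (fderiv ℝ v x a) := by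
  have key := (((contDiff_fderiv_top hv).hasFDerivAt_top x).clm_apply (hu.hasFDerivAt_top x)).sub
    (((contDiff_fderiv_top hu).hasFDerivAt_top x).clm_apply (hv.hasFDerivAt_top x))
  refine (congrArg (fun L : E →L[ℝ] E => L a) key.fderiv).trans ?_
  simp
  abel

/-- The exterior derivative `dH(a, b, c, d)` of the 3-form `H` at `x`. -/
noncomputable def extDeriv3 (H : E → E →L[ℝ] E →L[ℝ] E →L[ℝ] ℝ) (x a b c d : E) : ℝ :=
  fderiv ℝ H x a b c d - fderiv ℝ H x b a c d + fderiv ℝ H x c a b d - fderiv ℝ H x d a b c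

set_option maxHeartbeats 1000000 in
/-- The Leibniz defect of the 1-form part of the twisted Dorfman bracket is `ι_w ι_v ι_u dH`.
All terms without `H` cancel by symmetry of second derivatives, and all terms with an
undifferentiated `H` by antisymmetry. -/
theorem formBracket_leibniz_defect (hH : ContDiff ℝ (⊤ : ℕ∞) H)
    (h12 : ∀ x a b c, H x a b c = -H x b a c) (h23 : ∀ x a b c, H x a b c = -H x a c b)
    (hu : ContDiff ℝ (⊤ : ℕ∞) u) (hα : ContDiff ℝ (⊤ : ℕ∞) α)
    (hv : ContDiff ℝ (⊤ : ℕ∞) v) (hβ : ContDiff ℝ (⊤ : ℕ∞) β)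
    (hw : ContDiff ℝ (⊤ : ℕ∞) w) (hγ : ContDiff ℝ (⊤ : ℕ∞) γ) (x z : E) :
    formBracket H u α (lieBracket ℝ v w) (formBracket H v β w γ) x z
      - formBracket H (lieBracket ℝ u v) (formBracket H u α v β) w γ x z
      - formBracket H v β (lieBracket ℝ u w) (formBracket H u α w γ) x z
      = extDeriv3 H x (u x) (v x) (w x) z := by
  have sym {F : Type _} [NormedAddCommGroup F] [NormedSpace ℝ F] {f : E → F}
      (hf : ContDiff ℝ (⊤ : ℕ∞) f) (a b : E) :
      fderiv ℝ (fderiv ℝ f) x a b = fderiv ℝ (fderiv ℝ f) x b a :=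
    hf.contDiffAt.isSymmSndFDerivAt (by simpa using WithTop.coe_le_coe.2 (le_top : (2 : ℕ∞) ≤ ⊤)) a b
  have hlie (p q : E → E) : lieBracket ℝ p q x = fderiv ℝ q x (p x) - fderiv ℝ p x (q x) := rfl
  simp only [formBracket_apply, fderiv_formBracket_apply hH hu hα hv hβ,
    fderiv_formBracket_apply hH hu hα hw hγ, fderiv_formBracket_apply hH hv hβ hw hγ,
    fderiv_lieBracket_apply hu hv, hlie, extDeriv3, map_add, map_sub, sub_apply]
  rw [sym hu z (v x), sym hu z (w x), sym hv z (u x), sym hα z (v x), sym hα z (w x),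
    sym hβ z (u x), sym hγ (v x) (u x), sym hα (w x) (v x), sym hβ (w x) (u x)]
  linear_combination h23 x (v x) (w x) (fderiv ℝ u x z) - h12 x (v x) (fderiv ℝ u x z) (w x)
    + h12 x (v x) (fderiv ℝ u x (w x)) z - h23 x (u x) (fderiv ℝ v x z) (w x)

end Invariant

/-! ### Components on `ℝ^n` -/

section Coordinates

open VectorField

set_option maxSynthPendingDepth 3

variable {n : ℕ}

/-- The covector `z ↦ ∑ i, c i * z i` with components `c`. -/
noncomputable def covec (c : Fin n → ℝ) : (Fin n → ℝ) →L[ℝ] ℝ :=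
  ∑ i, c i • ContinuousLinearMap.proj (R := ℝ) (φ := fun _ : Fin n => ℝ) i

/-- The trilinear form `(a, b, c) ↦ ∑ i j k, T i j k * a i * b j * c k` with components `T`. -/
noncomputable def trilin (T : Fin n → Fin n → Fin n → ℝ) :
    (Fin n → ℝ) →L[ℝ] (Fin n → ℝ) →L[ℝ] (Fin n → ℝ) →L[ℝ] ℝ :=
  ∑ i, ∑ j, ∑ k, T i j k • (ContinuousLinearMap.proj (R := ℝ) (φ := fun _ : Fin n => ℝ) i).smulRight
    ((ContinuousLinearMap.proj (R := ℝ) (φ := fun _ : Fin n => ℝ) j).smulRight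
      (ContinuousLinearMap.proj (R := ℝ) (φ := fun _ : Fin n => ℝ) k))

lemma covec_apply (c z : Fin n → ℝ) : covec c z = ∑ i, c i * z i := by
  simp [covec, sum_apply]

lemma covec_single (c : Fin n → ℝ) (i : Fin n) : covec c (Pi.single i 1) = c i := by
  simp [covec_apply, Pi.single_apply]

lemma trilin_apply (T : Fin n → Fin n → Fin n → ℝ) (a b c : Fin n → ℝ) :
    trilin T a b c = ∑ i, ∑ j, ∑ k, T i j k * (a i * (b j * c k)) := by
  simp [trilin, sum_apply]

lemma trilin_single (T : Fin n → Fin n → Fin n → ℝ) (a b : Fin n → ℝ) (k : Fin n) :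
    trilin T a b (Pi.single k 1) = ∑ i, ∑ j, a i * b j * T i j k := by
  simp [trilin_apply, Pi.single_apply, mul_comm]

lemma trilin_basis (T : Fin n → Fin n → Fin n → ℝ) (i j k : Fin n) :
    trilin T (Pi.single i 1) (Pi.single j 1) (Pi.single k 1) = T i j k := by
  simp [trilin_single, Pi.single_apply]

lemma trilin_anti12 {T : Fin n → Fin n → Fin n → ℝ} (hT : ∀ i j k, T i j k = -T j i k)
    (a b c : Fin n → ℝ) : trilin T a b c = -trilin T b a c := by
  rw [trilin_apply, trilin_apply, Finset.sum_comm]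
  simp only [← Finset.sum_neg_distrib]
  refine Finset.sum_congr rfl fun j _ => Finset.sum_congr rfl fun i _ =>
    Finset.sum_congr rfl fun k _ => ?_
  rw [hT i j k]
  ring

lemma trilin_anti23 {T : Fin n → Fin n → Fin n → ℝ} (hT : ∀ i j k, T i j k = -T i k j)
    (a b c : Fin n → ℝ) : trilin T a b c = -trilin T a c b := by
  rw [trilin_apply, trilin_apply, ← Finset.sum_neg_distrib]
  refine Finset.sum_congr rfl fun i _ => ?_
  rw [Finset.sum_comm]
  simp only [← Finset.sum_neg_distrib]
  refine Finset.sum_congr rfl fun k _ => Finset.sum_congr rfl fun j _ => ?_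
  rw [hT i j k]
  ring

/-- A directional derivative in terms of partial derivatives. -/
lemma fderiv_eq_sum_pd (f : (Fin n → ℝ) → ℝ) (x a : Fin n → ℝ) :
    fderiv ℝ f x a = ∑ j, a j * pd j f x := by
  conv_lhs => rw [pi_eq_sum_univ' a]
  simp [pd]

lemma fderiv_components {u : (Fin n → ℝ) → Fin n → ℝ}
    (hu : ∀ i, ContDiff ℝ (⊤ : ℕ∞) fun x => u x i) (x a : Fin n → ℝ) (i : Fin n) :
    fderiv ℝ u x a i = ∑ j, a j * pd j (fun y => u y i) x := by
  rw [← fderiv_eq_sum_pd, fderiv_pi (φ := fun i x => u x i)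
    fun i => (hu i).differentiable (by simp) x]
  simp

lemma fderiv_components_single {u : (Fin n → ℝ) → Fin n → ℝ}
    (hu : ∀ i, ContDiff ℝ (⊤ : ℕ∞) fun x => u x i) (x : Fin n → ℝ) (i j : Fin n) :
    fderiv ℝ u x (Pi.single j 1) i = pd j (fun y => u y i) x := by
  simp [fderiv_components hu, Pi.single_apply]

lemma contDiff_covec {α : (Fin n → ℝ) → Fin n → ℝ}
    (hα : ∀ i, ContDiff ℝ (⊤ : ℕ∞) fun x => α x i) :
    ContDiff ℝ (⊤ : ℕ∞) fun x => covec (α x) :=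
  ContDiff.sum fun i _ => (hα i).smul contDiff_const

lemma fderiv_covec {α : (Fin n → ℝ) → Fin n → ℝ}
    (hα : ∀ i, ContDiff ℝ (⊤ : ℕ∞) fun x => α x i) (x a : Fin n → ℝ) :
    fderiv ℝ (fun y => covec (α y)) x a = covec (fderiv ℝ α x a) := by
  have h := HasFDerivAt.fun_sum (u := Finset.univ) fun i _ => ((hα i).hasFDerivAt_top x).smul_const
    (ContinuousLinearMap.proj (R := ℝ) (φ := fun _ : Fin n => ℝ) i)
  refine (congrArg (fun L : (Fin n → ℝ) →L[ℝ] (Fin n → ℝ) →L[ℝ] ℝ => L a) h.fderiv).trans ?_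
  simp [covec, fderiv_components hα, fderiv_eq_sum_pd, sum_apply]

lemma contDiff_trilin {H : Fin n → Fin n → Fin n → (Fin n → ℝ) → ℝ}
    (hH : ∀ i j k, ContDiff ℝ (⊤ : ℕ∞) (H i j k)) :
    ContDiff ℝ (⊤ : ℕ∞) fun x => trilin fun i j k => H i j k x :=
  ContDiff.sum fun i _ => ContDiff.sum fun j _ => ContDiff.sum fun k _ =>
    (hH i j k).smul contDiff_const

lemma fderiv_trilin_single {H : Fin n → Fin n → Fin n → (Fin n → ℝ) → ℝ}
    (hH : ∀ i j k, ContDiff ℝ (⊤ : ℕ∞) (H i j k)) (x : Fin n → ℝ) (l : Fin n) :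
    fderiv ℝ (fun y => trilin fun i j k => H i j k y) x (Pi.single l 1)
      = trilin fun i j k => pd l (H i j k) x := by
  have h := HasFDerivAt.fun_sum (u := Finset.univ) fun i _ =>
    HasFDerivAt.fun_sum (u := Finset.univ) fun j _ =>
    HasFDerivAt.fun_sum (u := Finset.univ) fun k _ => ((hH i j k).hasFDerivAt_top x).smul_const
      ((ContinuousLinearMap.proj (R := ℝ) (φ := fun _ : Fin n => ℝ) i).smulRight
      ((ContinuousLinearMap.proj (R := ℝ) (φ := fun _ : Fin n => ℝ) j).smulRight
      (ContinuousLinearMap.proj (R := ℝ) (φ := fun _ : Fin n => ℝ) k)))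
  refine (congrArg (fun L : (Fin n → ℝ) →L[ℝ] (Fin n → ℝ) →L[ℝ] (Fin n → ℝ) →L[ℝ] (Fin n → ℝ)
    →L[ℝ] ℝ => L (Pi.single l 1)) h.fderiv).trans ?_
  simp [trilin, pd, sum_apply]

variable {H : Fin n → Fin n → Fin n → (Fin n → ℝ) → ℝ} {e₁ e₂ e₃ : GSec n}

lemma SmoothGSec.contDiff_fst (h : SmoothGSec e₁) : ContDiff ℝ (⊤ : ℕ∞) e₁.1 :=
  contDiff_pi.2 h.1

lemma dorfman_fst (h₁ : SmoothGSec e₁) (h₂ : SmoothGSec e₂) :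
    (dorfman H e₁ e₂).1 = lieBracket ℝ e₁.1 e₂.1 := by
  funext x i
  simp [dorfman, lieBracket, fderiv_components h₁.1, fderiv_components h₂.1]

/-- The component formula for the Dorfman bracket agrees with the coordinate-free one. -/
lemma covec_dorfman_snd (h₁ : SmoothGSec e₁) (h₂ : SmoothGSec e₂) :
    (fun x => covec ((dorfman H e₁ e₂).2 x)) =
      formBracket (fun x => trilin fun i j k => H i j k x) e₁.1 (fun x => covec (e₁.2 x))
        e₂.1 (fun x => covec (e₂.2 x)) := by
  funext x
  refine ContinuousLinearMap.coe_injective (LinearMap.pi_ext' fun i => LinearMap.ext_ring ?_)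
  simp only [LinearMap.comp_apply, LinearMap.single_apply, ContinuousLinearMap.coe_coe]
  rw [formBracket_apply, fderiv_covec h₁.2, fderiv_covec h₂.2, fderiv_covec h₁.2]
  simp only [trilin_single, covec_apply, fderiv_components h₁.2, fderiv_components h₂.2,
    fderiv_components_single h₁.1, dorfman, mul_sub, Finset.sum_sub_distrib]
  simp [Pi.single_apply, mul_comm]
  ring

lemma smoothGSec_dorfman (hH : ∀ i j k, ContDiff ℝ (⊤ : ℕ∞) (H i j k))
    (h₁ : SmoothGSec e₁) (h₂ : SmoothGSec e₂) : SmoothGSec (dorfman H e₁ e₂) := by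
  constructor
  · refine contDiff_pi.1 ?_
    change ContDiff ℝ (⊤ : ℕ∞) (dorfman H e₁ e₂).1
    rw [dorfman_fst h₁ h₂]
    exact contDiff_lieBracket_top h₁.contDiff_fst h₂.contDiff_fst
  · intro i
    have h := contDiff_formBracket (contDiff_trilin hH) h₁.contDiff_fst (contDiff_covec h₁.2)
      h₂.contDiff_fst (contDiff_covec h₂.2)
    rw [← covec_dorfman_snd h₁ h₂] at h
    simpa [covec_single] using h.clm_apply (contDiff_const (c := Pi.single i 1))

lemma gPair_eq (e₁ e₂ : GSec n) (x : Fin n → ℝ) :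
    gPair e₁ e₂ x = covec (e₂.2 x) (e₁.1 x) + covec (e₁.2 x) (e₂.1 x) := by
  simp [gPair, covec_apply, Finset.sum_add_distrib, mul_comm]

lemma fderiv_gPair (h₁ : SmoothGSec e₁) (h₂ : SmoothGSec e₂) (x a : Fin n → ℝ) :
    fderiv ℝ (gPair e₁ e₂) x a =
      fderiv ℝ (fun y => covec (e₂.2 y)) x a (e₁.1 x) + covec (e₂.2 x) (fderiv ℝ e₁.1 x a)
      + (fderiv ℝ (fun y => covec (e₁.2 y)) x a (e₂.1 x) + covec (e₁.2 x) (fderiv ℝ e₂.1 x a)) := by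
  have c₁ := contDiff_covec h₁.2
  have c₂ := contDiff_covec h₂.2
  rw [funext (gPair_eq e₁ e₂), ← fderiv_form_apply c₂ h₁.contDiff_fst,
    ← fderiv_form_apply c₁ h₂.contDiff_fst, fderiv_fun_add]
  · rfl
  · exact (c₂.clm_apply h₁.contDiff_fst).differentiable (by simp) x
  · exact (c₁.clm_apply h₂.contDiff_fst).differentiable (by simp) x

/-- The contractions `ι_c ι_b ι_a dH` vanish exactly when the components of `dH` do. -/
lemma extDeriv3_trilin_eq_zero_iff (hH : ∀ i j k, ContDiff ℝ (⊤ : ℕ∞) (H i j k))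
    (x : Fin n → ℝ) :
    (∀ a b c l, extDeriv3 (fun x => trilin fun i j k => H i j k x) x a b c (Pi.single l 1) = 0) ↔
      ∀ i j k l,
        pd i (H j k l) x - pd j (H i k l) x + pd k (H i j l) x - pd l (H i j k) x = 0 := by
  have hb (i j k l : Fin n) : extDeriv3 (fun x => trilin fun i j k => H i j k x) x
      (Pi.single i 1) (Pi.single j 1) (Pi.single k 1) (Pi.single l 1) =
        pd i (H j k l) x - pd j (H i k l) x + pd k (H i j l) x - pd l (H i j k) x := by
    simp only [extDeriv3, fderiv_trilin_single hH, trilin_basis]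
  refine ⟨fun h i j k l => hb i j k l ▸ h _ _ _ _, fun h a b c l => ?_⟩
  have ext0 (f : (Fin n → ℝ) → ℝ) (hadd : ∀ p q, f (p + q) = f p + f q)
      (hsmul : ∀ (r : ℝ) p, f (r • p) = r * f p) (h0 : ∀ i, f (Pi.single i 1) = 0)
      (v : Fin n → ℝ) : f v = 0 := by
    let L : (Fin n → ℝ) →ₗ[ℝ] ℝ := { toFun := f, map_add' := hadd, map_smul' := hsmul }
    have hL : L = 0 := LinearMap.pi_ext' fun i => LinearMap.ext_ring (by simpa [L] using h0 i)
    exact congrArg (fun M : (Fin n → ℝ) →ₗ[ℝ] ℝ => M v) hL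
  refine ext0 (fun a => extDeriv3 _ x a b c _) ?_ ?_ (fun i => ?_) a
  · intro p q; simp [extDeriv3]; ring
  · intro r p; simp [extDeriv3]; ring
  refine ext0 (fun b => extDeriv3 _ x _ b c _) ?_ ?_ (fun j => ?_) b
  · intro p q; simp [extDeriv3]; ring
  · intro r p; simp [extDeriv3]; ring
  refine ext0 (fun c => extDeriv3 _ x _ _ c _) ?_ ?_ (fun k => ?_) c
  · intro p q; simp [extDeriv3]; ring
  · intro r p; simp [extDeriv3]; ring
  exact (hb i j k l).trans (h i j k l)

lemma dorfman_leibniz_fst (hH : ∀ i j k, ContDiff ℝ (⊤ : ℕ∞) (H i j k))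
    (h₁ : SmoothGSec e₁) (h₂ : SmoothGSec e₂) (h₃ : SmoothGSec e₃) (x : Fin n → ℝ) :
    (dorfman H e₁ (dorfman H e₂ e₃)).1 x
      = (dorfman H (dorfman H e₁ e₂) e₃).1 x + (dorfman H e₂ (dorfman H e₁ e₃)).1 x := by
  rw [dorfman_fst h₁ (smoothGSec_dorfman hH h₂ h₃), dorfman_fst (smoothGSec_dorfman hH h₁ h₂) h₃,
    dorfman_fst h₂ (smoothGSec_dorfman hH h₁ h₃), dorfman_fst h₁ h₂, dorfman_fst h₁ h₃,
    dorfman_fst h₂ h₃]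
  exact leibniz_identity_lieBracket (n := ((⊤ : ℕ∞) : WithTop ℕ∞))
    (by simpa using WithTop.coe_le_coe.2 (le_top : (2 : ℕ∞) ≤ ⊤))
    h₁.contDiff_fst.contDiffAt h₂.contDiff_fst.contDiffAt h₃.contDiff_fst.contDiffAt

/-- The Leibniz defect of the 1-form components of the Dorfman bracket is the contraction of `dH`
with the three vector fields. -/
lemma dorfman_leibniz_snd (hH : ∀ i j k, ContDiff ℝ (⊤ : ℕ∞) (H i j k))
    (h12 : ∀ i j k x, H i j k x = -H j i k x) (h23 : ∀ i j k x, H i j k x = -H i k j x)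
    (h₁ : SmoothGSec e₁) (h₂ : SmoothGSec e₂) (h₃ : SmoothGSec e₃) (x : Fin n → ℝ) (i : Fin n) :
    (dorfman H e₁ (dorfman H e₂ e₃)).2 x i - (dorfman H (dorfman H e₁ e₂) e₃).2 x i
      - (dorfman H e₂ (dorfman H e₁ e₃)).2 x i
      = extDeriv3 (fun x => trilin fun i j k => H i j k x) x (e₁.1 x) (e₂.1 x) (e₃.1 x)
        (Pi.single i 1) := by
  have key := formBracket_leibniz_defect (contDiff_trilin hH)
    (fun x => trilin_anti12 fun i j k => h12 i j k x)
    (fun x => trilin_anti23 fun i j k => h23 i j k x)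
    h₁.contDiff_fst (contDiff_covec h₁.2) h₂.contDiff_fst (contDiff_covec h₂.2)
    h₃.contDiff_fst (contDiff_covec h₃.2) x (Pi.single i 1)
  have comp {e e' : GSec n} (h : SmoothGSec e) (h' : SmoothGSec e') :
      (dorfman H e e').2 x i = formBracket (fun x => trilin fun i j k => H i j k x) e.1
        (fun x => covec (e.2 x)) e'.1 (fun x => covec (e'.2 x)) x (Pi.single i 1) := by
    rw [← covec_dorfman_snd h h', covec_single]
  rw [comp h₁ (smoothGSec_dorfman hH h₂ h₃), comp (smoothGSec_dorfman hH h₁ h₂) h₃,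
    comp h₂ (smoothGSec_dorfman hH h₁ h₃), covec_dorfman_snd h₁ h₂, covec_dorfman_snd h₁ h₃,
    covec_dorfman_snd h₂ h₃, dorfman_fst h₁ h₂, dorfman_fst h₁ h₃, dorfman_fst h₂ h₃]
  exact key

lemma pd_mul {f g : (Fin n → ℝ) → ℝ} (hf : ContDiff ℝ (⊤ : ℕ∞) f) (hg : ContDiff ℝ (⊤ : ℕ∞) g)
    (j : Fin n) (x : Fin n → ℝ) :
    pd j (fun y => f y * g y) x = f x * pd j g x + pd j f x * g x := by
  simp only [pd, ((hf.hasFDerivAt_top x).fun_mul (hg.hasFDerivAt_top x)).fderiv]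
  simp [mul_comm]

/-- `[e₁, f e₂] = f [e₁, e₂] + (ρ(e₁) f) e₂`, by the product rule. -/
lemma dorfman_smul (f : (Fin n → ℝ) → ℝ) (hf : ContDiff ℝ (⊤ : ℕ∞) f)
    (h₂ : SmoothGSec e₂) (x : Fin n → ℝ) (i : Fin n) :
    (dorfman H e₁ (fun y j => f y * e₂.1 y j, fun y j => f y * e₂.2 y j)).1 x i
        = f x * (dorfman H e₁ e₂).1 x i + (∑ j, e₁.1 x j * pd j f x) * e₂.1 x i
      ∧ (dorfman H e₁ (fun y j => f y * e₂.1 y j, fun y j => f y * e₂.2 y j)).2 x i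
        = f x * (dorfman H e₁ e₂).2 x i + (∑ j, e₁.1 x j * pd j f x) * e₂.2 x i := by
  constructor
  · simp only [dorfman, pd_mul hf (h₂.1 _), Finset.mul_sum, Finset.sum_mul,
      ← Finset.sum_add_distrib]
    exact Finset.sum_congr rfl fun j _ => by ring
  · simp only [dorfman, pd_mul hf (h₂.2 _), mul_add, mul_sub, Finset.mul_sum, Finset.sum_mul,
      ← Finset.sum_add_distrib, ← Finset.sum_sub_distrib]
    refine Finset.sum_congr rfl fun j _ => ?_
    have h : ∑ k, e₁.1 x j * (f x * e₂.1 x k) * H j k i x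
        = ∑ k, f x * (e₁.1 x j * e₂.1 x k * H j k i x) :=
      Finset.sum_congr rfl fun k _ => by ring
    rw [h]
    ring

/-- `[e, e] = ½ 𝒟⟨e, e⟩`: the derivative of `α` along `u` cancels, and `ι_u ι_u H = 0`. -/
lemma dorfman_self (h12 : ∀ i j k x, H i j k x = -H j i k x) (h₁ : SmoothGSec e₁)
    (x : Fin n → ℝ) (i : Fin n) :
    (dorfman H e₁ e₁).1 x i = 0
      ∧ (dorfman H e₁ e₁).2 x i = (1 / 2 : ℝ) * pd i (gPair e₁ e₁) x := by
  refine ⟨by simp [dorfman], ?_⟩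
  have hc := congrArg (fun L : (Fin n → ℝ) →L[ℝ] ℝ => L (Pi.single i 1))
    (congrFun (covec_dorfman_snd (H := H) h₁ h₁) x)
  simp only [covec_single, formBracket_apply] at hc
  have hT := trilin_anti12 (fun i j k => h12 i j k x) (e₁.1 x) (e₁.1 x) (Pi.single i 1)
  rw [hc, pd, fderiv_gPair h₁ h₁]
  linarith

/-- The pairing is invariant: `H` enters only through `H(u, v, w) + H(u, w, v) = 0`. -/
lemma anchor_gPair (h23 : ∀ i j k x, H i j k x = -H i k j x)
    (h₁ : SmoothGSec e₁) (h₂ : SmoothGSec e₂) (h₃ : SmoothGSec e₃) (x : Fin n → ℝ) :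
    (∑ j, e₁.1 x j * pd j (gPair e₂ e₃) x)
      = gPair (dorfman H e₁ e₂) e₃ x + gPair e₂ (dorfman H e₁ e₃) x := by
  have hT := trilin_anti23 (fun i j k => h23 i j k x) (e₁.1 x) (e₂.1 x) (e₃.1 x)
  rw [← fderiv_eq_sum_pd, fderiv_gPair h₂ h₃, gPair_eq, gPair_eq,
    congrFun (covec_dorfman_snd h₁ h₂) x, congrFun (covec_dorfman_snd h₁ h₃) x,
    dorfman_fst h₁ h₂, dorfman_fst h₁ h₃, formBracket_apply, formBracket_apply]
  simp only [lieBracket, map_sub]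
  linarith

end Coordinates

/-! ### The Courant algebroid axioms -/

/-- The Leibniz identity for the `H`-twisted Dorfman bracket holds for all
smooth generalized sections iff `H` is closed; moreover, for every totally antisymmetric `H`
the remaining Courant algebroid axioms hold. -/
theorem standard_courant_algebroid_iff_H_closed (n : ℕ)
    (H : Fin n → Fin n → Fin n → (Fin n → ℝ) → ℝ)
    (hH : ∀ i j k, ContDiff ℝ (⊤ : ℕ∞) (H i j k))
    (hHanti1 : ∀ i j k x, H i j k x = - H j i k x)
    (hHanti2 : ∀ i j k x, H i j k x = - H i k j x) :
    ((∀ e₁ e₂ e₃ : GSec n,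
        SmoothGSec e₁ → SmoothGSec e₂ → SmoothGSec e₃ →
        ∀ x i,
          (dorfman H e₁ (dorfman H e₂ e₃)).1 x i
              = (dorfman H (dorfman H e₁ e₂) e₃).1 x i
                + (dorfman H e₂ (dorfman H e₁ e₃)).1 x i
            ∧ (dorfman H e₁ (dorfman H e₂ e₃)).2 x i
              = (dorfman H (dorfman H e₁ e₂) e₃).2 x i
                + (dorfman H e₂ (dorfman H e₁ e₃)).2 x i)
      ↔ (∀ i j k l x,
          pd i (H j k l) x - pd j (H i k l) x + pd k (H i j l) x - pd l (H i j k) x = 0))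
    ∧ (∀ e₁ e₂ : GSec n, SmoothGSec e₁ → SmoothGSec e₂ →
        -- `ρ([e₁,e₂]) = [ρ(e₁), ρ(e₂)]`
        ∀ x i, (dorfman H e₁ e₂).1 x i
          = ∑ j, (e₁.1 x j * pd j (fun y => e₂.1 y i) x
              - e₂.1 x j * pd j (fun y => e₁.1 y i) x))
    ∧ (∀ (f : (Fin n → ℝ) → ℝ), ContDiff ℝ (⊤ : ℕ∞) f →
        ∀ e₁ e₂ : GSec n, SmoothGSec e₁ → SmoothGSec e₂ →
        -- `[e₁, f e₂] = f [e₁,e₂] + (ρ(e₁)f) e₂`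
        ∀ x i,
          (dorfman H e₁ (fun y j => f y * e₂.1 y j, fun y j => f y * e₂.2 y j)).1 x i
              = f x * (dorfman H e₁ e₂).1 x i
                + (∑ j, e₁.1 x j * pd j f x) * e₂.1 x i
            ∧ (dorfman H e₁ (fun y j => f y * e₂.1 y j, fun y j => f y * e₂.2 y j)).2 x i
              = f x * (dorfman H e₁ e₂).2 x i
                + (∑ j, e₁.1 x j * pd j f x) * e₂.2 x i)
    ∧ (∀ e : GSec n, SmoothGSec e →
        -- `[e,e] = ½ 𝒟⟨e,e⟩`, where `𝒟f = (0, df)`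
        ∀ x i,
          (dorfman H e e).1 x i = 0
            ∧ (dorfman H e e).2 x i = (1 / 2 : ℝ) * pd i (gPair e e) x)
    ∧ (∀ e₁ e₂ e₃ : GSec n,
        SmoothGSec e₁ → SmoothGSec e₂ → SmoothGSec e₃ →
        -- `ρ(e₁)⟨e₂,e₃⟩ = ⟨[e₁,e₂],e₃⟩ + ⟨e₂,[e₁,e₃]⟩`
        ∀ x,
          (∑ j, e₁.1 x j * pd j (gPair e₂ e₃) x)
            = gPair (dorfman H e₁ e₂) e₃ x + gPair e₂ (dorfman H e₁ e₃) x) := by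
  refine ⟨⟨fun h i j k l x => ?_, fun h e₁ e₂ e₃ h₁ h₂ h₃ x i => ⟨?_, ?_⟩⟩,
    fun _ _ _ _ _ _ => rfl, fun f hf e₁ e₂ _ h₂ x i => dorfman_smul f hf h₂ x i,
    fun e he x i => dorfman_self hHanti1 he x i,
    fun e₁ e₂ e₃ h₁ h₂ h₃ x => anchor_gPair hHanti2 h₁ h₂ h₃ x⟩
  · refine (extDeriv3_trilin_eq_zero_iff hH x).1 (fun a b c l => ?_) i j k l
    -- constant vector fields suffice to detect `dH` at `x`
    have hs (a : Fin n → ℝ) : SmoothGSec ((fun _ => a, fun _ => 0) : GSec n) :=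
      ⟨fun _ => contDiff_const, fun _ => contDiff_const⟩
    have hd := dorfman_leibniz_snd hH hHanti1 hHanti2 (hs a) (hs b) (hs c) x l
    have hL := (h _ _ _ (hs a) (hs b) (hs c) x l).2
    rw [← hd, hL]
    ring
  · rw [dorfman_leibniz_fst hH h₁ h₂ h₃, Pi.add_apply]
  · have hd := dorfman_leibniz_snd hH hHanti1 hHanti2 h₁ h₂ h₃ x i
    rw [(extDeriv3_trilin_eq_zero_iff hH x).2 fun i j k l => h i j k l x] at hd
    linarith
end

section
/- Let k_{AB} (A,B < s) be a constant symmetric invertible real matrix, let ρ^i_A : ℝ^n → ℝ and H_{ABC} : ℝ^n → ℝ (totally antisymmetric) be smooth, and let ω^B_{Ai} be a metric connection (ω_{ABi} := Σ_C ω^C_{Ai} k_{CB} antisymmetric in A,B). Define T_{ABC} := H_{ABC} − Σ_i (ρ^i_A ω_{BCi} + ρ^i_B ω_{CAi} + ρ^i_C ω_{ABi}), ∇_i T_{ABC} := ∂_i T_{ABC} − Σ_D (ω^D_{Ai} T_{DBC} + ω^D_{Bi} T_{ADC} + ω^D_{Ci} T_{ABD}), R^B_{ijA} := ∂_i ω^B_{Aj}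 − ∂_j ω^B_{Ai} − Σ_C ω^C_{Ai} ω^B_{Cj} + Σ_C ω^C_{Aj} ω^B_{Ci}, R_{ijAB} := Σ_D R^D_{ijA} k_{DB}, and S_{iABC} := ∇_i T_{ABC} + Σ_j (ρ^j_A R_{ijBC} + ρ^j_B R_{ijCA} + ρ^j_C R_{ijAB}). Then, identically (with no further hypotheses), S_{iABC} = ∂_i H_{ABC} + Σ_{cyc(A,B,C)} [ − Σ_D ω^D_{Ai} H_{DBC} − Σ_j ρ^j_A ∂_j ω_{BCi} − Σ_j (∂_i ρ^j_A) ω_{BCj} + Σ_{D,j} ω^D_{Ai} ρ^j_D ω_{BCj} ], where Σ_{cyc(A,B,C)} denotes the sum over the three cyclic permutations of (A,B,C). -/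
/-- The lowered connection coefficients `ω_{ABi} = Σ_C ω^C_{Ai} k_{CB}`. -/
def lowOmega {n s : ℕ} (k : Fin s → Fin s → ℝ)
    (ω : Fin s → Fin s → Fin n → (Fin n → ℝ) → ℝ)
    (A B : Fin s) (i : Fin n) : (Fin n → ℝ) → ℝ :=
  fun x => ∑ C, ω C A i x * k C B

/-- The Gualtieri torsion
`T_{ABC} = H_{ABC} − Σ_i (ρ^i_A ω_{BCi} + ρ^i_B ω_{CAi} + ρ^i_C ω_{ABi})`. -/
def gTorsion {n s : ℕ} (k : Fin s → Fin s → ℝ)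
    (ρ : Fin n → Fin s → (Fin n → ℝ) → ℝ)
    (H : Fin s → Fin s → Fin s → (Fin n → ℝ) → ℝ)
    (ω : Fin s → Fin s → Fin n → (Fin n → ℝ) → ℝ)
    (A B C : Fin s) : (Fin n → ℝ) → ℝ :=
  fun x => H A B C x - ∑ i,
    (ρ i A x * lowOmega k ω B C i x + ρ i B x * lowOmega k ω C A i x
      + ρ i C x * lowOmega k ω A B i x)

/-- The covariant derivative of the Gualtieri torsion,
`∇_i T_{ABC} = ∂_i T_{ABC} − Σ_D (ω^D_{Ai} T_{DBC} + ω^D_{Bi} T_{ADC} + ω^D_{Ci} T_{ABD})`. -/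
noncomputable def covTorsion {n s : ℕ} (k : Fin s → Fin s → ℝ)
    (ρ : Fin n → Fin s → (Fin n → ℝ) → ℝ)
    (H : Fin s → Fin s → Fin s → (Fin n → ℝ) → ℝ)
    (ω : Fin s → Fin s → Fin n → (Fin n → ℝ) → ℝ)
    (i : Fin n) (A B C : Fin s) : (Fin n → ℝ) → ℝ :=
  fun x => pd i (gTorsion k ρ H ω A B C) x - ∑ D,
    (ω D A i x * gTorsion k ρ H ω D B C x + ω D B i x * gTorsion k ρ H ω A D C x
      + ω D C i x * gTorsion k ρ H ω A B D x)

/-- The curvature of the connection `ω`: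
`R^B_{ijA} = ∂_i ω^B_{Aj} − ∂_j ω^B_{Ai} − Σ_C ω^C_{Ai} ω^B_{Cj} + Σ_C ω^C_{Aj} ω^B_{Ci}`. -/
noncomputable def curv {n s : ℕ}
    (ω : Fin s → Fin s → Fin n → (Fin n → ℝ) → ℝ)
    (i j : Fin n) (A B : Fin s) : (Fin n → ℝ) → ℝ :=
  fun x => pd i (ω B A j) x - pd j (ω B A i) x
    - (∑ C, ω C A i x * ω B C j x) + ∑ C, ω C A j x * ω B C i x

/-- The lowered curvature `R_{ijAB} = Σ_D R^D_{ijA} k_{DB}`. -/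
noncomputable def curvLow {n s : ℕ} (k : Fin s → Fin s → ℝ)
    (ω : Fin s → Fin s → Fin n → (Fin n → ℝ) → ℝ)
    (i j : Fin n) (A B : Fin s) : (Fin n → ℝ) → ℝ :=
  fun x => ∑ D, curv ω i j A D x * k D B

/-- The basic curvature of a Courant algebroid with connection:
`S_{iABC} = ∇_i T_{ABC} + Σ_j (ρ^j_A R_{ijBC} + ρ^j_B R_{ijCA} + ρ^j_C R_{ijAB})`. -/
noncomputable def basicS {n s : ℕ} (k : Fin s → Fin s → ℝ)
    (ρ : Fin n → Fin s → (Fin n → ℝ) → ℝ)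
    (H : Fin s → Fin s → Fin s → (Fin n → ℝ) → ℝ)
    (ω : Fin s → Fin s → Fin n → (Fin n → ℝ) → ℝ)
    (i : Fin n) (A B C : Fin s) : (Fin n → ℝ) → ℝ :=
  fun x => covTorsion k ρ H ω i A B C x + ∑ j,
    (ρ j A x * curvLow k ω i j B C x + ρ j B x * curvLow k ω i j C A x
      + ρ j C x * curvLow k ω i j A B x)

/-- One cyclic summand in the explicit local expression of the basic curvature:
`− Σ_D ω^D_{Ai} H_{DBC} − Σ_j ρ^j_A ∂_j ω_{BCi} − Σ_j (∂_i ρ^j_A) ω_{BCj}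
  + Σ_{D,j} ω^D_{Ai} ρ^j_D ω_{BCj}`. -/
noncomputable def basicSCyc {n s : ℕ} (k : Fin s → Fin s → ℝ)
    (ρ : Fin n → Fin s → (Fin n → ℝ) → ℝ)
    (H : Fin s → Fin s → Fin s → (Fin n → ℝ) → ℝ)
    (ω : Fin s → Fin s → Fin n → (Fin n → ℝ) → ℝ)
    (i : Fin n) (A B C : Fin s) : (Fin n → ℝ) → ℝ :=
  fun x =>
    - (∑ D, ω D A i x * H D B C x)
      - (∑ j, ρ j A x * pd j (lowOmega k ω B C i) x)
      - (∑ j, pd i (ρ j A) x * lowOmega k ω B C j x)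
      + ∑ D, ∑ j, ω D A i x * ρ j D x * lowOmega k ω B C j x

section Calculus

variable {n s : ℕ}

lemma pd_lowOmega (k : Fin s → Fin s → ℝ) (ω : Fin s → Fin s → Fin n → (Fin n → ℝ) → ℝ)
    (hω : ∀ B A i, Differentiable ℝ (ω B A i)) (j : Fin n) (A B : Fin s) (i : Fin n)
    (x : Fin n → ℝ) :
    pd j (lowOmega k ω A B i) x = ∑ C, pd j (ω C A i) x * k C B := by
  have h : HasFDerivAt (lowOmega k ω A B i) (∑ C, k C B • fderiv ℝ (ω C A i) x) x :=
    HasFDerivAt.fun_sum fun C _ => ((hω C A i) x).hasFDerivAt.mul_const (k C B)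
  simp only [pd, h.fderiv, sum_apply, smul_apply,
    smul_eq_mul, mul_comm]

lemma differentiable_lowOmega (k : Fin s → Fin s → ℝ)
    (ω : Fin s → Fin s → Fin n → (Fin n → ℝ) → ℝ)
    (hω : ∀ B A i, Differentiable ℝ (ω B A i)) (A B : Fin s) (i : Fin n) :
    Differentiable ℝ (lowOmega k ω A B i) := by
  unfold lowOmega
  fun_prop

lemma pd_gTorsion (k : Fin s → Fin s → ℝ) (ρ : Fin n → Fin s → (Fin n → ℝ) → ℝ)
    (H : Fin s → Fin s → Fin s → (Fin n → ℝ) → ℝ)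
    (ω : Fin s → Fin s → Fin n → (Fin n → ℝ) → ℝ)
    (hρ : ∀ i A, Differentiable ℝ (ρ i A)) (hH : ∀ A B C, Differentiable ℝ (H A B C))
    (hω : ∀ B A i, Differentiable ℝ (ω B A i)) (i : Fin n) (A B C : Fin s) (x : Fin n → ℝ) :
    pd i (gTorsion k ρ H ω A B C) x = pd i (H A B C) x - ∑ j,
      ((pd i (ρ j A) x * lowOmega k ω B C j x + ρ j A x * pd i (lowOmega k ω B C j) x)
      + (pd i (ρ j B) x * lowOmega k ω C A j x + ρ j B x * pd i (lowOmega k ω C A j) x)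
      + (pd i (ρ j C) x * lowOmega k ω A B j x + ρ j C x * pd i (lowOmega k ω A B j) x)) := by
  have hl := differentiable_lowOmega k ω hω
  have hm (j : Fin n) (A B C : Fin s) := (hρ j A x).hasFDerivAt.mul (hl B C j x).hasFDerivAt
  have h := (hH A B C x).hasFDerivAt.sub (HasFDerivAt.fun_sum (u := Finset.univ) fun j _ =>
    ((hm j A B C).add (hm j B C A)).add (hm j C A B))
  have h' := congrArg (fun L => L (Pi.single i 1)) h.fderiv
  refine h'.trans ?_
  simp only [pd, sub_apply, sum_apply,
    add_apply, smul_apply, smul_eq_mul]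
  congr 1
  exact Finset.sum_congr rfl fun j _ => by ring

/-- The lowered curvature of a metric connection, with both quadratic terms written so that the
unlowered `ω` carries the form index `i`. -/
lemma curvLow_eq (k : Fin s → Fin s → ℝ) (hksymm : ∀ A B, k A B = k B A)
    (ω : Fin s → Fin s → Fin n → (Fin n → ℝ) → ℝ)
    (hω : ∀ B A i, Differentiable ℝ (ω B A i))
    (hmetric : ∀ A B i x, lowOmega k ω A B i x = - lowOmega k ω B A i x)
    (i j : Fin n) (B C : Fin s) (x : Fin n → ℝ) :
    curvLow k ω i j B C x = pd i (lowOmega k ω B C j) x - pd j (lowOmega k ω B C i) x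
      - (∑ E, ω E B i x * lowOmega k ω E C j x)
      - ∑ E, ω E C i x * lowOmega k ω B E j x := by
  have hlow (i j : Fin n) : ∑ D, (∑ E, ω E B i x * ω D E j x) * k D C
      = ∑ E, ω E B i x * lowOmega k ω E C j x := by
    simp only [lowOmega, Finset.sum_mul, Finset.mul_sum]
    rw [Finset.sum_comm]
    simp only [mul_assoc]
  have hswap : ∑ E, ω E B j x * lowOmega k ω E C i x
      = - ∑ E, ω E C i x * lowOmega k ω B E j x := by
    simp only [hmetric _ C i x, mul_neg, Finset.sum_neg_distrib]
    simp only [lowOmega, Finset.mul_sum]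
    rw [Finset.sum_comm]
    congr 1
    refine Finset.sum_congr rfl fun E _ => Finset.sum_congr rfl fun F _ => ?_
    rw [hksymm E F]
    ring
  simp only [curvLow, curv, add_mul, sub_mul, Finset.sum_add_distrib, Finset.sum_sub_distrib,
    hlow, hswap, pd_lowOmega k ω hω]
  ring

end Calculus

/-- The basic curvature of a Courant algebroid with metric connection has the
explicit local-coordinate expression
`S_{iABC} = ∂_i H_{ABC} + Σ_{cyc(A,B,C)} [−ω^D_{Ai} H_{DBC} − ρ^j_A ∂_j ω_{BCi}
  − (∂_i ρ^j_A) ω_{BCj} + ω^D_{Ai} ρ^j_D ω_{BCj}]`. -/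
theorem basicS_local_expression {n s : ℕ}
    (k kinv : Fin s → Fin s → ℝ)
    (hksymm : ∀ A B, k A B = k B A)
    (hkinv : ∀ A B, ∑ C, k A C * kinv C B = if A = B then 1 else 0)
    (hkinv' : ∀ A B, ∑ C, kinv A C * k C B = if A = B then 1 else 0)
    (ρ : Fin n → Fin s → (Fin n → ℝ) → ℝ)
    (H : Fin s → Fin s → Fin s → (Fin n → ℝ) → ℝ)
    (ω : Fin s → Fin s → Fin n → (Fin n → ℝ) → ℝ)
    (hρ : ∀ i A, ContDiff ℝ (⊤ : ℕ∞) (ρ i A))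
    (hH : ∀ A B C, ContDiff ℝ (⊤ : ℕ∞) (H A B C))
    (hω : ∀ B A i, ContDiff ℝ (⊤ : ℕ∞) (ω B A i))
    (hHanti1 : ∀ A B C x, H A B C x = - H B A C x)
    (hHanti2 : ∀ A B C x, H A B C x = - H A C B x)
    (hmetric : ∀ A B i x, lowOmega k ω A B i x = - lowOmega k ω B A i x) :
    ∀ i A B C x,
      basicS k ρ H ω i A B C x
        = pd i (H A B C) x
          + basicSCyc k ρ H ω i A B C x
          + basicSCyc k ρ H ω i B C A x
          + basicSCyc k ρ H ω i C A B x := by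
  intro i A B C x
  have dρ (i A) : Differentiable ℝ (ρ i A) := (hρ i A).differentiable (by simp)
  have dH (A B C) : Differentiable ℝ (H A B C) := (hH A B C).differentiable (by simp)
  have dω (B A i) : Differentiable ℝ (ω B A i) := (hω B A i).differentiable (by simp)
  have hcyc (A B C) : H A B C x = H B C A x := by
    rw [hHanti1 A B C x, hHanti2 B A C x, neg_neg]
  have hH2 : ∑ D, ω D B i x * H A D C x = ∑ D, ω D B i x * H D C A x := by
    simp only [hcyc A _ C]
  have hH3 : ∑ D, ω D C i x * H A B D x = ∑ D, ω D C i x * H D A B x := by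
    simp only [← hcyc _ A B]
  -- Interchange of the sums over `D` and `j`, with the derivation index in either lower slot.
  have hX (A B C : Fin s) : ∑ j, ρ j A x * ∑ D, ω D B i x * lowOmega k ω D C j x
      = ∑ D, ω D B i x * ∑ j, ρ j A x * lowOmega k ω D C j x := by
    simp only [Finset.mul_sum]
    rw [Finset.sum_comm]
    exact Finset.sum_congr rfl fun D _ => Finset.sum_congr rfl fun j _ => by ring
  have hY (A B C : Fin s) : ∑ j, ρ j A x * ∑ D, ω D C i x * lowOmega k ω B D j x
      = ∑ D, ω D C i x * ∑ j, ρ j A x * lowOmega k ω B D j x := by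
    simp only [Finset.mul_sum]
    rw [Finset.sum_comm]
    exact Finset.sum_congr rfl fun D _ => Finset.sum_congr rfl fun j _ => by ring
  have hZ (A B C : Fin s) : ∑ D, ∑ j, ω D A i x * ρ j D x * lowOmega k ω B C j x
      = ∑ D, ω D A i x * ∑ j, ρ j D x * lowOmega k ω B C j x := by
    simp only [Finset.mul_sum, mul_assoc]
  simp only [basicS, covTorsion, basicSCyc, pd_gTorsion k ρ H ω dρ dH dω,
    curvLow_eq k hksymm ω dω hmetric, hZ]
  simp only [gTorsion, mul_add, mul_sub, Finset.sum_add_distrib, Finset.sum_sub_distrib,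
    hX, hY, hH2, hH3]
  ring
end

section
/- Let k_{AB} (A,B < s) be a constant symmetric invertible real matrix and fix i < n. Let Λ be the exterior algebra of ℝ^s over ℝ with degree-one generators η^A (A < s). Let M : ℝ^n → (s×s real matrices) be smooth, pointwise invertible, and k-orthogonal: Σ_{C,D} M^C_A k_{CD} M^D_B = k_{AB} at every point. Let ω^B_{Ai} : ℝ^n → ℝ be smooth with ω_{ABi} := Σ_C ω^C_{Ai} k_{CB} antisymmetric in A,B, and let ω'^B_{Ai} be determined by the connection transformation law Σ_B ω'^A_{Bi} M^B_C = Σ_B M^A_B ω^B_{Ci} − ∂_i M^A_C, with ω'_{ABi} := Σ_C ω'^C_{Ai} k_{CB}. Fix a point x ∈ ℝ^n, set η'^A := Σ_B M^A_B(x) η^B ∈ Λ, and for a real number z_i set z'_i := z_i − ½ Σ_{A,B,C,D} k_{AB} M^A_C(x) (∂_i M^B_D)(x) η^C η^D ∈ Λ. Then, as elements of Λ: z'_i + ½ Σ_{A,B} ω'_{ABi}(x) η'^A η'^B = z_i + ½ Σ_{A,B} ω_{ABi}(x) η^A η^B. That is, the covariantized momentum coordinate z^∇_i := z_i + ½ Σ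 ω_{ABi} η^A η^B of the graded manifold T*[2]E[1] is invariant (transforms covariantly) under a change of frame of E. -/
/-- The degree-one generator `η^A` of the exterior algebra `⋀(ℝ^s)`. -/
noncomputable def etaGen {s : ℕ} (A : Fin s) : ExteriorAlgebra ℝ (Fin s → ℝ) :=
  ExteriorAlgebra.ι ℝ (Pi.single A 1 : Fin s → ℝ)

/-- The quadratic element `∑ S_{CD} η^C η^D` of the exterior algebra attached to a matrix `S`. -/
noncomputable def etaQuad {s : ℕ} (S : Matrix (Fin s) (Fin s) ℝ) :
    ExteriorAlgebra ℝ (Fin s → ℝ) :=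
  ∑ C, ∑ D, S C D • (etaGen C * etaGen D)

theorem etaQuad_sub {s : ℕ} (S T : Matrix (Fin s) (Fin s) ℝ) :
    etaQuad (S - T) = etaQuad S - etaQuad T := by
  simp only [etaQuad, Matrix.sub_apply, sub_smul, Finset.sum_sub_distrib]

theorem etaGen_anticomm {s : ℕ} (A B : Fin s) :
    etaGen A * etaGen B = -(etaGen B * etaGen A) :=
  eq_neg_of_add_eq_zero_left (ExteriorAlgebra.ι_add_mul_swap _ _)

theorem etaQuad_transpose {s : ℕ} (S : Matrix (Fin s) (Fin s) ℝ) :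
    etaQuad S.transpose = -etaQuad S := by
  unfold etaQuad
  rw [Finset.sum_comm, ← Finset.sum_neg_distrib]
  refine Finset.sum_congr rfl fun C _ => ?_
  rw [← Finset.sum_neg_distrib]
  refine Finset.sum_congr rfl fun D _ => ?_
  rw [Matrix.transpose_apply, etaGen_anticomm D C, smul_neg]

/-- Interchange of an outer and an inner pair of summation indices. -/
theorem sum_pairs_comm {s : ℕ} {V : Type*} [AddCommMonoid V]
    (f : Fin s → Fin s → Fin s → Fin s → V) :
    ∑ A, ∑ B, ∑ C, ∑ D, f A B C D = ∑ C, ∑ D, ∑ A, ∑ B, f A B C D := by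
  have h := Finset.sum_comm (s := Finset.univ) (t := Finset.univ)
    (f := fun (p q : Fin s × Fin s) => f p.1 p.2 q.1 q.2)
  simpa only [Fintype.sum_prod_type] using h

/-- Substituting `η ↦ P η` acts on quadratic elements by the congruence `S ↦ Pᵀ S P`. -/
theorem etaQuad_frame {s : ℕ} (S P : Matrix (Fin s) (Fin s) ℝ) :
    ∑ A, ∑ B, S A B • ((∑ C, P A C • etaGen C) * (∑ D, P B D • etaGen D))
      = etaQuad (P.transpose * S * P) := by
  have hl : ∀ A B, S A B • ((∑ C, P A C • etaGen C) * (∑ D, P B D • etaGen D))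
      = ∑ C, ∑ D, (P A C * S A B * P B D) • (etaGen C * etaGen D) := by
    intro A B
    rw [Finset.sum_mul_sum, Finset.smul_sum]
    refine Finset.sum_congr rfl fun C _ => ?_
    rw [Finset.smul_sum]
    refine Finset.sum_congr rfl fun D _ => ?_
    rw [smul_mul_smul_comm, smul_smul]
    congr 1
    ring
  simp only [hl]
  rw [sum_pairs_comm]
  unfold etaQuad
  refine Finset.sum_congr rfl fun C _ => Finset.sum_congr rfl fun D _ => ?_
  simp only [← Finset.sum_smul]
  congr 1
  simp only [Matrix.mul_apply, Matrix.transpose_apply, Finset.sum_mul]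
  exact Finset.sum_comm

/-- The covariantized momentum coordinate
`z^∇_i = z_i + ½ Σ ω_{ABi} η^A η^B` of the graded manifold `T*[2]E[1]` is invariant under a
change of frame `η' = M η`, `ω' = MωM⁻¹ − (∂M)M⁻¹`,
`z'_i = z_i − ½ Σ k_{AB} M^A_C (∂_i M^B_D) η^C η^D`. -/
theorem covariant_momentum_frame_invariance {n s : ℕ}
    (k kinv : Fin s → Fin s → ℝ)
    (hksymm : ∀ A B, k A B = k B A)
    (hkinv : ∀ A B, ∑ C, k A C * kinv C B = if A = B then 1 else 0)
    (hkinv' : ∀ A B, ∑ C, kinv A C * k C B = if A = B then 1 else 0)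
    (i : Fin n)
    (M : (Fin n → ℝ) → Fin s → Fin s → ℝ)
    (hM : ∀ A B, ContDiff ℝ (⊤ : ℕ∞) (fun y => M y A B))
    (hMinv : ∀ y, ∃ N : Fin s → Fin s → ℝ,
      (∀ A B, ∑ C, M y A C * N C B = if A = B then 1 else 0)
        ∧ (∀ A B, ∑ C, N A C * M y C B = if A = B then 1 else 0))
    (horth : ∀ y A B, ∑ C, ∑ D, M y C A * k C D * M y D B = k A B)
    (ω ω' : Fin s → Fin s → Fin n → (Fin n → ℝ) → ℝ)
    (hω : ∀ B A j, ContDiff ℝ (⊤ : ℕ∞) (ω B A j))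
    (hanti : ∀ A B j y, (∑ C, ω C A j y * k C B) = - ∑ C, ω C B j y * k C A)
    (hlaw : ∀ A C y,
      (∑ B, ω' A B i y * M y B C) = (∑ B, M y A B * ω B C i y) - pd i (fun t => M t A C) y)
    (x : Fin n → ℝ) (z : ℝ) :
    ((z • (1 : ExteriorAlgebra ℝ (Fin s → ℝ))
        - (1 / 2 : ℝ) • ∑ A, ∑ B, ∑ C, ∑ D,
            (k A B * M x A C * pd i (fun t => M t B D) x) • (etaGen C * etaGen D))
        + (1 / 2 : ℝ) • ∑ A, ∑ B,
            (∑ C, ω' C A i x * k C B) •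
              ((∑ A', M x A A' • etaGen A') * (∑ B', M x B B' • etaGen B')))
      = z • (1 : ExteriorAlgebra ℝ (Fin s → ℝ))
          + (1 / 2 : ℝ) • ∑ A, ∑ B,
              (∑ C, ω C A i x * k C B) • (etaGen A * etaGen B) := by
  let P : Matrix (Fin s) (Fin s) ℝ := Matrix.of (M x)
  let K : Matrix (Fin s) (Fin s) ℝ := Matrix.of k
  let W : Matrix (Fin s) (Fin s) ℝ := Matrix.of fun A B => ω A B i x
  let W' : Matrix (Fin s) (Fin s) ℝ := Matrix.of fun A B => ω' A B i x
  let D : Matrix (Fin s) (Fin s) ℝ := Matrix.of fun A B => pd i (fun t => M t A B) x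
  have hK : K.transpose = K := by
    ext A B
    exact hksymm B A
  have hP : P.transpose * K * P = K := by
    ext A B
    simp only [Matrix.mul_apply, Matrix.transpose_apply, Finset.sum_mul]
    rw [Finset.sum_comm]
    exact horth x A B
  have hL : W' * P = P * W - D := by
    ext A C
    simp only [Matrix.mul_apply, Matrix.sub_apply]
    exact hlaw A C x
  have hshift : ∑ A, ∑ B, ∑ C, ∑ E,
      (k A B * M x A C * pd i (fun t => M t B E) x) • (etaGen C * etaGen E)
        = etaQuad (P.transpose * K * D) := by
    rw [sum_pairs_comm]
    unfold etaQuad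
    refine Finset.sum_congr rfl fun C _ => Finset.sum_congr rfl fun E _ => ?_
    simp only [← Finset.sum_smul]
    congr 1
    simp only [Matrix.mul_apply, Matrix.transpose_apply, Finset.sum_mul]
    rw [Finset.sum_comm]
    refine Finset.sum_congr rfl fun B _ => Finset.sum_congr rfl fun A _ => ?_
    simp only [P, K, D, Matrix.of_apply]
    ring
  have hnew : ∑ A, ∑ B, (∑ C, ω' C A i x * k C B) •
      ((∑ A', M x A A' • etaGen A') * (∑ B', M x B B' • etaGen B'))
        = etaQuad (P.transpose * (W'.transpose * K) * P) :=
    etaQuad_frame (W'.transpose * K) P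
  have hold : ∑ A, ∑ B, (∑ C, ω C A i x * k C B) • (etaGen A * etaGen B)
      = etaQuad (W.transpose * K) := rfl
  have hmat : P.transpose * (W'.transpose * K) * P
      = W.transpose * K - (P.transpose * K * D).transpose := by
    calc P.transpose * (W'.transpose * K) * P
        = (W' * P).transpose * K * P := by
          simp only [Matrix.transpose_mul, Matrix.mul_assoc]
      _ = W.transpose * (P.transpose * K * P) - D.transpose * K * P := by
          rw [hL]
          simp only [Matrix.transpose_sub, Matrix.transpose_mul, Matrix.sub_mul,
            Matrix.mul_assoc]
      _ = W.transpose * K - (P.transpose * K * D).transpose := by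
          rw [hP]
          simp only [Matrix.transpose_mul, Matrix.transpose_transpose, hK, Matrix.mul_assoc]
  rw [hshift, hnew, hold, hmat, etaQuad_sub, etaQuad_transpose, sub_neg_eq_add, smul_add]
  abel
end

section
/- Let ρ^i_a, C^c_{ab} be a rank-r anchored structure on ℝ^n satisfying (L1): Σ_j (ρ^j_a ∂_j ρ^i_b − ρ^j_b ∂_j ρ^i_a) = Σ_c C^c_{ab} ρ^i_c, and let ω^b_{ai} be a connection with ∇_i ρ^j_a := ∂_i ρ^j_a − Σ_b ρ^j_b ω^b_{ai} = 0 for all i,j,a. Let H_{ijk} : ℝ^n → ℝ be smooth, totally antisymmetric and closed: ∂_i H_{jkl} − ∂_j H_{ikl} + ∂_k H_{ijl} − ∂_l H_{ijk} = 0 for all i,j,k,l. Define the contracted fluxes H⁽²⁾_{ija} := Σ_k H_{ijk} ρ^k_a and H⁽¹⁾_{iab} := Σ_{j,k} H_{ijk} ρ^j_a ρ^k_b, with covariant derivatives ∇_i H⁽²⁾_{jka} := ∂_i H⁽²⁾_{jka} − Σ_b ω^b_{ai} H⁽²⁾_{jkb} and ∇_i H⁽¹⁾_{jab} := ∂_i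 H⁽¹⁾_{jab} − Σ_c (ω^c_{ai} H⁽¹⁾_{jcb} + ω^c_{bi} H⁽¹⁾_{jac}). Then the first two descent equations hold: (i) Σ_l ρ^l_a ∂_l H_{ijk} = ∇_i H⁽²⁾_{jka} + ∇_j H⁽²⁾_{kia} + ∇_k H⁽²⁾_{ija} for all i,j,k,a; and (ii) Σ_k (ρ^k_a ∂_k H⁽²⁾_{ijb} − ρ^k_b ∂_k H⁽²⁾_{ija}) − Σ_c C^c_{ab} H⁽²⁾_{ijc} + ∇_i H⁽¹⁾_{jab} − ∇_j H⁽¹⁾_{iab} = 0 for all i,j,a,b. -/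
/-- The once-contracted flux `H⁽²⁾_{ija} = Σ_k H_{ijk} ρ^k_a`. -/
def fluxH2 {n r : ℕ} (H : Fin n → Fin n → Fin n → (Fin n → ℝ) → ℝ)
    (ρ : Fin n → Fin r → (Fin n → ℝ) → ℝ)
    (i j : Fin n) (a : Fin r) : (Fin n → ℝ) → ℝ :=
  fun x => ∑ k, H i j k x * ρ k a x

/-- The twice-contracted flux `H⁽¹⁾_{iab} = Σ_{j,k} H_{ijk} ρ^j_a ρ^k_b`. -/
def fluxH1 {n r : ℕ} (H : Fin n → Fin n → Fin n → (Fin n → ℝ) → ℝ)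
    (ρ : Fin n → Fin r → (Fin n → ℝ) → ℝ)
    (i : Fin n) (a b : Fin r) : (Fin n → ℝ) → ℝ :=
  fun x => ∑ j, ∑ k, H i j k x * ρ j a x * ρ k b x

/-- Covariant derivative of `H⁽²⁾`:
`∇_i H⁽²⁾_{jka} = ∂_i H⁽²⁾_{jka} − Σ_b ω^b_{ai} H⁽²⁾_{jkb}`. -/
noncomputable def covFluxH2 {n r : ℕ} (H : Fin n → Fin n → Fin n → (Fin n → ℝ) → ℝ)
    (ρ : Fin n → Fin r → (Fin n → ℝ) → ℝ)
    (ω : Fin r → Fin r → Fin n → (Fin n → ℝ) → ℝ)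
    (i j k : Fin n) (a : Fin r) : (Fin n → ℝ) → ℝ :=
  fun x => pd i (fluxH2 H ρ j k a) x - ∑ b, ω b a i x * fluxH2 H ρ j k b x

/-- Covariant derivative of `H⁽¹⁾`:
`∇_i H⁽¹⁾_{jab} = ∂_i H⁽¹⁾_{jab} − Σ_c (ω^c_{ai} H⁽¹⁾_{jcb} + ω^c_{bi} H⁽¹⁾_{jac})`. -/
noncomputable def covFluxH1 {n r : ℕ} (H : Fin n → Fin n → Fin n → (Fin n → ℝ) → ℝ)
    (ρ : Fin n → Fin r → (Fin n → ℝ) → ℝ)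
    (ω : Fin r → Fin r → Fin n → (Fin n → ℝ) → ℝ)
    (i j : Fin n) (a b : Fin r) : (Fin n → ℝ) → ℝ :=
  fun x => pd i (fluxH1 H ρ j a b) x
    - ∑ c, (ω c a i x * fluxH1 H ρ j c b x + ω c b i x * fluxH1 H ρ j a c x)

section Helpers

variable {n r : ℕ}

theorem pd_mul_of_differentiable {f g : (Fin n → ℝ) → ℝ} (hf : Differentiable ℝ f)
    (hg : Differentiable ℝ g) (i : Fin n) (x : Fin n → ℝ) :
    pd i (fun y => f y * g y) x = pd i f x * g x + f x * pd i g x := by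
  unfold pd
  rw [fderiv_fun_mul (hf x) (hg x)]
  simp
  ring

theorem pd_sum_of_differentiable {m : ℕ} {f : Fin m → (Fin n → ℝ) → ℝ}
    (hf : ∀ k, Differentiable ℝ (f k)) (i : Fin n) (x : Fin n → ℝ) :
    pd i (fun y => ∑ k, f k y) x = ∑ k, pd i (f k) x := by
  unfold pd
  rw [fderiv_fun_sum (fun k _ => hf k x)]
  simp

variable {H : Fin n → Fin n → Fin n → (Fin n → ℝ) → ℝ} {ρ : Fin n → Fin r → (Fin n → ℝ) → ℝ}
  {ω : Fin r → Fin r → Fin n → (Fin n → ℝ) → ℝ}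

theorem pd_fluxH2 (hH : ∀ i j k, Differentiable ℝ (H i j k)) (hρ : ∀ i a, Differentiable ℝ (ρ i a))
    (m i j : Fin n) (a : Fin r) (x : Fin n → ℝ) :
    pd m (fluxH2 H ρ i j a) x
      = ∑ l, (pd m (H i j l) x * ρ l a x + H i j l x * pd m (ρ l a) x) := by
  unfold fluxH2
  rw [pd_sum_of_differentiable (fun k => (hH i j k).fun_mul (hρ k a))]
  exact Finset.sum_congr rfl fun k _ => pd_mul_of_differentiable (hH i j k) (hρ k a) m x

theorem pd_fluxH1 (hH : ∀ i j k, Differentiable ℝ (H i j k)) (hρ : ∀ i a, Differentiable ℝ (ρ i a))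
    (m i : Fin n) (a b : Fin r) (x : Fin n → ℝ) :
    pd m (fluxH1 H ρ i a b) x
      = ∑ k, ∑ l, (pd m (H i k l) x * ρ k a x * ρ l b x
          + H i k l x * pd m (ρ k a) x * ρ l b x + H i k l x * ρ k a x * pd m (ρ l b) x) := by
  have h1 : ∀ k l, Differentiable ℝ (fun y => H i k l y * ρ k a y) :=
    fun k l => (hH i k l).mul (hρ k a)
  have h2 : ∀ k l, Differentiable ℝ (fun y => H i k l y * ρ k a y * ρ l b y) :=
    fun k l => (h1 k l).mul (hρ l b)
  unfold fluxH1
  rw [pd_sum_of_differentiable (fun k => Differentiable.fun_sum fun l _ => h2 k l)]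
  refine Finset.sum_congr rfl fun k _ => ?_
  rw [pd_sum_of_differentiable (h2 k)]
  refine Finset.sum_congr rfl fun l _ => ?_
  rw [pd_mul_of_differentiable (h1 k l) (hρ l b),
    pd_mul_of_differentiable (hH i k l) (hρ k a)]
  ring

/-- Because `∇ρ = 0`, the covariant derivative of `ι_ρ H` differentiates only `H`. -/
theorem covFluxH2_eq (hH : ∀ i j k, Differentiable ℝ (H i j k))
    (hρ : ∀ i a, Differentiable ℝ (ρ i a))
    (hflat : ∀ i j a x, pd i (ρ j a) x - ∑ b, ρ j b x * ω b a i x = 0)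
    (i j k : Fin n) (a : Fin r) (x : Fin n → ℝ) :
    covFluxH2 H ρ ω i j k a x = ∑ l, pd i (H j k l) x * ρ l a x := by
  have hω : ∑ b, ω b a i x * fluxH2 H ρ j k b x = ∑ l, H j k l x * pd i (ρ l a) x := by
    simp only [fluxH2, sub_eq_zero.mp (hflat _ _ _ _), Finset.mul_sum]
    rw [Finset.sum_comm]
    refine Finset.sum_congr rfl fun l _ => Finset.sum_congr rfl fun b _ => ?_
    ring
  rw [covFluxH2, pd_fluxH2 hH hρ, hω, Finset.sum_add_distrib, add_sub_cancel_right]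

/-- Because `∇ρ = 0`, the covariant derivative of `ι_ρ ι_ρ H` differentiates only `H`. -/
theorem covFluxH1_eq (hH : ∀ i j k, Differentiable ℝ (H i j k))
    (hρ : ∀ i a, Differentiable ℝ (ρ i a))
    (hflat : ∀ i j a x, pd i (ρ j a) x - ∑ b, ρ j b x * ω b a i x = 0)
    (i j : Fin n) (a b : Fin r) (x : Fin n → ℝ) :
    covFluxH1 H ρ ω i j a b x = ∑ k, ∑ l, pd i (H j k l) x * ρ k a x * ρ l b x := by
  have hω : ∑ c, (ω c a i x * fluxH1 H ρ j c b x + ω c b i x * fluxH1 H ρ j a c x)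
      = ∑ k, ∑ l, (H j k l x * pd i (ρ k a) x * ρ l b x
          + H j k l x * ρ k a x * pd i (ρ l b) x) := by
    simp only [fluxH1, sub_eq_zero.mp (hflat _ _ _ _), Finset.mul_sum, Finset.sum_mul,
      ← Finset.sum_add_distrib]
    rw [Finset.sum_comm]
    refine Finset.sum_congr rfl fun k _ => ?_
    rw [Finset.sum_comm]
    refine Finset.sum_congr rfl fun l _ => Finset.sum_congr rfl fun c _ => ?_
    ring
  rw [covFluxH1, pd_fluxH1 hH hρ, hω]
  simp only [← Finset.sum_sub_distrib]
  refine Finset.sum_congr rfl fun k _ => Finset.sum_congr rfl fun l _ => ?_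
  ring

end Helpers

/-- For a Lie algebroid structure `(ρ, C)` with flat anchor (`∇ρ = 0`) and a
closed 3-form `H`, the contracted fluxes `H⁽²⁾ = ι_ρ H` and `H⁽¹⁾ = ι_ρ ι_ρ H` satisfy the first
two descent equations of the gauged standard Courant sigma model. -/
theorem flux_descent_equations {n r : ℕ}
    (ρ : Fin n → Fin r → (Fin n → ℝ) → ℝ)
    (C : Fin r → Fin r → Fin r → (Fin n → ℝ) → ℝ)
    (ω : Fin r → Fin r → Fin n → (Fin n → ℝ) → ℝ)
    (H : Fin n → Fin n → Fin n → (Fin n → ℝ) → ℝ)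
    (hρ : ∀ i a, ContDiff ℝ (⊤ : ℕ∞) (ρ i a))
    (hC : ∀ c a b, ContDiff ℝ (⊤ : ℕ∞) (C c a b))
    (hω : ∀ b a i, ContDiff ℝ (⊤ : ℕ∞) (ω b a i))
    (hH : ∀ i j k, ContDiff ℝ (⊤ : ℕ∞) (H i j k))
    (hCanti : ∀ c a b x, C c a b x = - C c b a x)
    (hHanti1 : ∀ i j k x, H i j k x = - H j i k x)
    (hHanti2 : ∀ i j k x, H i j k x = - H i k j x)
    (hL1 : ∀ i a b x,
      (∑ j, (ρ j a x * pd j (ρ i b) x - ρ j b x * pd j (ρ i a) x))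
        = ∑ c, C c a b x * ρ i c x)
    (hflat : ∀ i j a x, pd i (ρ j a) x - ∑ b, ρ j b x * ω b a i x = 0)
    (hclosed : ∀ i j k l x,
      pd i (H j k l) x - pd j (H i k l) x + pd k (H i j l) x - pd l (H i j k) x = 0) :
    (∀ i j k a x,
        (∑ l, ρ l a x * pd l (H i j k) x)
          = covFluxH2 H ρ ω i j k a x + covFluxH2 H ρ ω j k i a x
            + covFluxH2 H ρ ω k i j a x)
      ∧ (∀ i j a b x,
        (∑ k, (ρ k a x * pd k (fluxH2 H ρ i j b) x - ρ k b x * pd k (fluxH2 H ρ i j a) x))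
            - (∑ c, C c a b x * fluxH2 H ρ i j c x)
            + covFluxH1 H ρ ω i j a b x - covFluxH1 H ρ ω j i a b x = 0) := by
  have dH : ∀ i j k, Differentiable ℝ (H i j k) := fun i j k => (hH i j k).differentiable (by simp)
  have dρ : ∀ i a, Differentiable ℝ (ρ i a) := fun i a => (hρ i a).differentiable (by simp)
  refine ⟨fun i j k a x => ?_, fun i j a b x => ?_⟩
  · simp only [covFluxH2_eq dH dρ hflat, ← Finset.sum_add_distrib]
    refine Finset.sum_congr rfl fun l _ => ?_
    have hki : pd j (H k i l) x = - pd j (H i k l) x := by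
      have : H k i l = fun y => - H i k l y := funext (hHanti1 k i l)
      simp [pd, this, fderiv_fun_neg]
    rw [hki]
    linear_combination (-ρ l a x) * hclosed i j k l x
  · -- The terms with a differentiated anchor assemble into `H_{ijl} [ρ_a, ρ_b]^l`.
    have hC2 : ∑ c, C c a b x * fluxH2 H ρ i j c x
        = ∑ k, ∑ l, H i j l x * (ρ k a x * pd k (ρ l b) x - ρ k b x * pd k (ρ l a) x) := by
      rw [Finset.sum_comm]
      simp only [← Finset.mul_sum, hL1, fluxH2]
      simp only [Finset.mul_sum]
      rw [Finset.sum_comm]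
      refine Finset.sum_congr rfl fun l _ => Finset.sum_congr rfl fun c _ => ?_
      ring
    -- Exchanging the summation indices brings both derivative terms to the weight `ρ^k_a ρ^l_b`.
    have hswap : ∑ k, ∑ l, ρ k b x * (pd k (H i j l) x * ρ l a x)
        = ∑ k, ∑ l, ρ l b x * (pd l (H i j k) x * ρ k a x) := Finset.sum_comm
    have hlie : (∑ k, (ρ k a x * pd k (fluxH2 H ρ i j b) x
          - ρ k b x * pd k (fluxH2 H ρ i j a) x)) - ∑ c, C c a b x * fluxH2 H ρ i j c x
        = (∑ k, ∑ l, ρ k a x * (pd k (H i j l) x * ρ l b x))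
          - ∑ k, ∑ l, ρ k b x * (pd k (H i j l) x * ρ l a x) := by
      rw [hC2]
      simp only [pd_fluxH2 dH dρ, Finset.mul_sum, ← Finset.sum_sub_distrib]
      refine Finset.sum_congr rfl fun k _ => Finset.sum_congr rfl fun l _ => ?_
      ring
    rw [hlie, hswap, covFluxH1_eq dH dρ hflat, covFluxH1_eq dH dρ hflat]
    simp only [← Finset.sum_sub_distrib, ← Finset.sum_add_distrib]
    refine Finset.sum_eq_zero fun k _ => Finset.sum_eq_zero fun l _ => ?_
    linear_combination (ρ k a x * ρ l b x) * hclosed i j k l x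
end
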